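/- arXiv:0710.5419 — 4 statements merged into one kernel-verified Lean document; each statement's English description precedes it below -/
import Mathlib

section
/- The series identity ∑_{k=1}^∞ 2^{2k−2} ((k−1)!)² / ((2k)! · k) = (π² ln 2)/4 − (7/8) ζ(3) holds, where ζ(3) = ∑_{n=1}^∞ 1/n³ is Apéry's constant. -/
open Real

open Filter Topology MeasureTheory Set

/-- Wallis type products. -/
noncomputable def wal : ℕ → ℝ
  | 0 => 1
  | n + 1 => wal n * (2 * n + 2) / (2 * n + 3)

lemma wal_pos (n : ℕ) : 0 < wal n := by
  induction n with
  | zero => simp [wal]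
  | succ n ih => rw [wal]; positivity

lemma wal_succ (n : ℕ) : wal (n + 1) * (2 * n + 3) = wal n * (2 * n + 2) := by
  rw [wal]; field_simp

lemma wal_sq_le (n : ℕ) : wal n ^ 2 ≤ 1 / (n + 1) := by
  induction n with
  | zero => simp [wal]
  | succ n ih =>
    have h : wal (n + 1) ^ 2 = wal n ^ 2 * ((2 * n + 2) ^ 2 / (2 * n + 3) ^ 2) := by
      rw [wal]; field_simp
    rw [h]
    calc _ ≤ 1 / ((n : ℝ) + 1) * ((2 * n + 2) ^ 2 / (2 * n + 3) ^ 2) := by gcongr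
      _ ≤ _ := by
        push_cast
        rw [div_mul_div_comm, div_le_div_iff₀ (by positivity) (by positivity)]
        have : (0 : ℝ) ≤ n := by positivity
        nlinarith [mul_nonneg this this]

lemma wal_tendsto : Tendsto wal atTop (𝓝 0) := by
  have h : Tendsto (fun n => wal n ^ 2) atTop (𝓝 0) :=
    squeeze_zero (fun n => by positivity) wal_sq_le tendsto_one_div_add_atTop_nhds_zero_nat
  have := h.sqrt
  simpa [Real.sqrt_sq (wal_pos _).le] using this

lemma wal_eq (n : ℕ) : wal n = 2 ^ (2 * n) * (Nat.factorial n) ^ 2 / Nat.factorial (2 * n + 1) := by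
  induction n with
  | zero => simp [wal]
  | succ n ih =>
    rw [wal, ih]
    have : 2 * (n + 1) + 1 = 2 * n + 1 + 1 + 1 := by ring
    rw [this, Nat.factorial_succ (2 * n + 1 + 1), Nat.factorial_succ (2 * n + 1),
      Nat.factorial_succ n]
    have := Nat.factorial_pos (2 * n + 1)
    push_cast
    field_simp
    ring

lemma term_eq (n : ℕ) : (2 : ℝ) ^ (2 * n) * (Nat.factorial n) ^ 2
        / (Nat.factorial (2 * (n + 1)) * (n + 1)) = wal n / (n + 1) * (1 / (2 * n + 2)) := by
  rw [wal_eq]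
  have : 2 * (n + 1) = 2 * n + 1 + 1 := by ring
  rw [this, Nat.factorial_succ (2 * n + 1)]
  have := Nat.factorial_pos (2 * n + 1)
  push_cast
  field_simp
  ring

noncomputable def gg (N : ℕ) (t : ℝ) : ℝ :=
  t ^ 2 - ∑ n ∈ Finset.range N, wal n / (n + 1) * sin t ^ (2 * n + 2)

noncomputable def ww (N : ℕ) (t : ℝ) : ℝ :=
  t - ∑ n ∈ Finset.range N, wal n * (sin t ^ (2 * n + 1) * cos t)

lemma gg_deriv (N : ℕ) (t : ℝ) : HasDerivAt (gg N) (2 * ww N t) t := by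
  have h : ∀ n ∈ Finset.range N, HasDerivAt (fun t => wal n / (n + 1) * sin t ^ (2 * n + 2))
      (2 * (wal n * (sin t ^ (2 * n + 1) * cos t))) t := by
    intro n _
    have := ((hasDerivAt_sin t).pow (2 * n + 2)).const_mul (wal n / (n + 1))
    refine HasDerivAt.congr_deriv this ?_
    push_cast
    field_simp
  have := (hasDerivAt_pow 2 t).sub (HasDerivAt.fun_sum h)
  refine HasDerivAt.congr_deriv this ?_
  simp [ww, mul_sub, Finset.mul_sum]

lemma ww_aux (N : ℕ) (s : ℝ) : (1 : ℝ) - ∑ n ∈ Finset.range N,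
    wal n * ((2 * n + 1) * s ^ (2 * n) - (2 * n + 2) * s ^ (2 * n + 2))
    = (2 * N + 1) * wal N * s ^ (2 * N) := by
  induction N with
  | zero => simp [wal]
  | succ N ih =>
    rw [Finset.sum_range_succ, ← sub_sub, ih]
    have := wal_succ N
    push_cast
    linear_combination (-s ^ (2 * N + 2)) * this

lemma ww_deriv (N : ℕ) (t : ℝ) :
    HasDerivAt (ww N) ((2 * N + 1) * wal N * sin t ^ (2 * N)) t := by
  have h : ∀ n ∈ Finset.range N, HasDerivAt (fun t => wal n * (sin t ^ (2 * n + 1) * cos t))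
      (wal n * ((2 * n + 1) * sin t ^ (2 * n) - (2 * n + 2) * sin t ^ (2 * n + 2))) t := by
    intro n _
    have := (((hasDerivAt_sin t).pow (2 * n + 1)).mul (hasDerivAt_cos t)).const_mul (wal n)
    refine HasDerivAt.congr_deriv this ?_
    have hc : cos t ^ 2 = 1 - sin t ^ 2 := by rw [cos_sq']
    push_cast
    simp only [Pi.pow_apply]
    linear_combination (wal n * (2 * n + 1) * sin t ^ (2 * n)) * hc
  have := (hasDerivAt_id t).sub (HasDerivAt.fun_sum h)
  rw [ww_aux] at this
  exact this

lemma nonneg_of_deriv {f f' : ℝ → ℝ} (h : ∀ t, HasDerivAt f (f' t) t) (h0 : f 0 = 0)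
    (hp : ∀ t ∈ Icc 0 (π / 2), 0 ≤ f' t) : ∀ t ∈ Icc 0 (π / 2), 0 ≤ f t := by
  intro t ht
  have : MonotoneOn f (Icc 0 (π / 2)) := by
    apply monotoneOn_of_deriv_nonneg (convex_Icc _ _)
    · exact fun x _ => (h x).continuousAt.continuousWithinAt
    · exact fun x _ => (h x).differentiableAt.differentiableWithinAt
    · intro x hx
      rw [(h x).deriv]
      exact hp x (interior_subset hx)
  have := this ⟨le_rfl, ht.1.trans ht.2⟩ ht ht.1
  linarith

lemma sin_nn {t : ℝ} (ht : t ∈ Icc 0 (π / 2)) : 0 ≤ sin t :=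
  sin_nonneg_of_nonneg_of_le_pi ht.1 (by linarith [ht.2, pi_pos])

lemma cos_nn {t : ℝ} (ht : t ∈ Icc 0 (π / 2)) : 0 ≤ cos t :=
  cos_nonneg_of_neg_pi_div_two_le_of_le (by linarith [ht.1, pi_pos]) ht.2

lemma ww_nonneg (N : ℕ) : ∀ t ∈ Icc 0 (π / 2), 0 ≤ ww N t := by
  apply nonneg_of_deriv (ww_deriv N) (by simp [ww])
  intro t ht
  have := wal_pos N
  have := sin_nn ht
  positivity

lemma gg_nonneg (N : ℕ) : ∀ t ∈ Icc 0 (π / 2), 0 ≤ gg N t := by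
  apply nonneg_of_deriv (gg_deriv N) (by simp [gg])
  intro t ht
  have := ww_nonneg N t ht
  positivity

lemma gg_le (N : ℕ) (t : ℝ) (ht : t ∈ Icc 0 (π / 2)) : gg N t ≤ 2 * t * ww N t := by
  have := nonneg_of_deriv (f := fun t => 2 * t * ww N t - gg N t)
    (f' := fun t => 2 * t * ((2 * N + 1) * wal N * sin t ^ (2 * N))) ?_ (by simp [gg]) ?_ t ht
  · simpa using this
  · intro t
    have := (((hasDerivAt_id t).const_mul 2).mul (ww_deriv N t)).sub (gg_deriv N t)
    refine HasDerivAt.congr_deriv this ?_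
    simp
  · intro t ht
    have := wal_pos N
    have := sin_nn ht
    have := ht.1
    positivity

lemma ww_le (N : ℕ) (t : ℝ) (ht : t ∈ Icc 0 (π / 2)) :
    ww N t * cos t ≤ wal N * sin t ^ (2 * N + 1) := by
  have := nonneg_of_deriv (f := fun t => wal N * sin t ^ (2 * N + 1) - ww N t * cos t)
    (f' := fun t => ww N t * sin t) ?_ (by simp [ww]) ?_ t ht
  · simpa using this
  · intro t
    have := (((hasDerivAt_sin t).pow (2 * N + 1)).const_mul (wal N)).sub
      ((ww_deriv N t).mul (hasDerivAt_cos t))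
    refine HasDerivAt.congr_deriv this ?_
    push_cast
    ring
  · intro t ht
    have := ww_nonneg N t ht
    have := sin_nn ht
    positivity

/-- `t²/sin t`, continuous at `0`. -/
noncomputable def FF (t : ℝ) : ℝ := t / sinc t

lemma FF_eq {t : ℝ} : FF t = t ^ 2 / sin t := by
  rcases eq_or_ne t 0 with rfl | h
  · simp [FF]
  · rw [FF, sinc_of_ne_zero h, div_div_eq_mul_div, sq]

lemma sin_pos' {t : ℝ} (ht : t ∈ Ioc 0 (π / 2)) : 0 < sin t :=
  sin_pos_of_pos_of_lt_pi ht.1 (by linarith [ht.2, pi_pos])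

lemma FF_cont : ContinuousOn FF (Icc 0 (π / 2)) := by
  apply ContinuousOn.div continuousOn_id continuous_sinc.continuousOn
  intro t ht
  rcases eq_or_lt_of_le ht.1 with h | h
  · simp [← h]
  · rw [sinc_of_ne_zero h.ne']
    exact (div_pos (sin_pos' ⟨h, ht.2⟩) h).ne'

lemma uIcc_pi : uIcc 0 (π / 2) = Icc 0 (π / 2) := uIcc_of_le (by positivity)

lemma FFmul_int {u : ℝ → ℝ} (hu : Continuous u) :
    IntervalIntegrable (fun t => FF t * u t) volume 0 (π / 2) := by
  apply ContinuousOn.intervalIntegrable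
  rw [uIcc_pi]
  exact FF_cont.mul hu.continuousOn

lemma int_sin_pow (n : ℕ) : ∫ t in (0)..(π / 2), sin t ^ (2 * n + 1) * cos t = 1 / (2 * n + 2) := by
  have h : ∀ t ∈ uIcc 0 (π / 2), HasDerivAt (fun t => sin t ^ (2 * n + 2) / (2 * n + 2))
      (sin t ^ (2 * n + 1) * cos t) t := by
    intro t _
    have := ((hasDerivAt_sin t).pow (2 * n + 2)).div_const (2 * n + 2 : ℝ)
    refine HasDerivAt.congr_deriv this ?_
    push_cast
    field_simp
  rw [intervalIntegral.integral_eq_sub_of_hasDerivAt h]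
  · simp
  · apply Continuous.intervalIntegrable
    fun_prop

lemma diff_bound (N : ℕ) :
    ‖(∫ t in (0)..(π / 2), FF t * cos t) -
      ∑ n ∈ Finset.range N, wal n / (n + 1) * (1 / (2 * n + 2))‖ ≤ π * wal N * |π / 2 - 0| := by
  have h1 : ∑ n ∈ Finset.range N, wal n / (n + 1) * (1 / (2 * n + 2)) =
      ∫ t in (0)..(π / 2), ∑ n ∈ Finset.range N, wal n / (n + 1) * (sin t ^ (2 * n + 1) * cos t) := by
    rw [intervalIntegral.integral_finsetSum]
    · apply Finset.sum_congr rfl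
      intro n _
      rw [intervalIntegral.integral_const_mul, int_sin_pow]
    · intro n _
      apply Continuous.intervalIntegrable
      fun_prop
  rw [h1, ← intervalIntegral.integral_sub (FFmul_int continuous_cos)
    (by apply Continuous.intervalIntegrable; fun_prop)]
  apply intervalIntegral.norm_integral_le_of_norm_le_const
  intro t ht
  rw [uIoc_of_le (by positivity)] at ht
  have hs := sin_pos' ht
  have ht' : t ∈ Icc 0 (π / 2) := ⟨ht.1.le, ht.2⟩
  have e : FF t * cos t - ∑ n ∈ Finset.range N, wal n / (n + 1) * (sin t ^ (2 * n + 1) * cos t)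
      = gg N t * cos t / sin t := by
    rw [FF_eq, gg, sub_mul, sub_div, Finset.sum_mul, Finset.sum_div]
    congr 1
    · ring
    · apply Finset.sum_congr rfl
      intro n _
      field_simp
      ring
  have hg := gg_nonneg N t ht'
  have hc := cos_nn ht'
  rw [e, Real.norm_of_nonneg (by positivity), div_le_iff₀ hs]
  have hw := wal_pos N
  have h2 : t * 2 ≤ π * sin t := by
    have := mul_le_sin ht.1.le ht.2
    rw [div_mul_eq_mul_div, div_le_iff₀ pi_pos] at this
    linarith
  have ht0 := ht.1
  calc gg N t * cos t ≤ (2 * t * ww N t) * cos t := by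
        gcongr
        exact gg_le N t ht'
    _ = (2 * t) * (ww N t * cos t) := by ring
    _ ≤ (2 * t) * (wal N * sin t ^ (2 * N + 1)) := by
        exact mul_le_mul_of_nonneg_left (ww_le N t ht') (by positivity)
    _ ≤ (2 * t) * (wal N * 1) := by
        gcongr
        exact pow_le_one₀ hs.le (sin_le_one t)
    _ ≤ _ := by nlinarith

lemma lhs_hasSum : HasSum (fun n : ℕ => wal n / (n + 1) * (1 / (2 * n + 2)))
    (∫ t in (0)..(π / 2), FF t * cos t) := by
  rw [hasSum_iff_tendsto_nat_of_nonneg (fun n => by have := wal_pos n; positivity)]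
  rw [tendsto_iff_norm_sub_tendsto_zero]
  have : Tendsto (fun N => π * wal N * |π / 2 - 0|) atTop (𝓝 0) := by
    simpa using (wal_tendsto.const_mul π).mul_const |π / 2 - 0|
  refine squeeze_zero (fun _ => norm_nonneg _) (fun N => ?_) this
  rw [norm_sub_rev]
  exact diff_bound N

/-! Second part: evaluating the integral. -/

lemma rl : Tendsto (fun N : ℕ => ∫ t in (0)..(π / 2), FF t * cos ((4 * N + 1) * t)) atTop (𝓝 0) := by
  have h := Real.tendsto_integral_exp_smul_cocompact
    (indicator (Ioc 0 (π / 2)) (fun t => (FF t : ℂ)))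
  have hw : Tendsto (fun N : ℕ => (4 * (N : ℝ) + 1) / (2 * π)) atTop (cocompact ℝ) := by
    refine Tendsto.mono_right ?_ atTop_le_cocompact
    apply Tendsto.atTop_div_const (by positivity)
    apply tendsto_atTop_add_const_right
    exact tendsto_natCast_atTop_atTop.const_mul_atTop (by norm_num)
  have h2 := (Complex.continuous_re.tendsto 0).comp (h.comp hw)
  simp only [Complex.zero_re] at h2
  refine h2.congr fun N => ?_
  simp only [Function.comp_apply]
  have e : ∀ v : ℝ, Real.fourierChar (-(v * ((4 * (N : ℝ) + 1) / (2 * π)))) •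
      indicator (Ioc 0 (π / 2)) (fun t => (FF t : ℂ)) v =
      indicator (Ioc 0 (π / 2)) (fun v => Complex.exp (((-((4 * N + 1) * v) : ℝ) : ℂ) * Complex.I)
         * (FF v : ℂ)) v := by
    intro v
    by_cases hv : v ∈ Ioc 0 (π / 2)
    · rw [indicator_of_mem hv, indicator_of_mem hv, Circle.smul_def, Real.fourierChar_apply,
        smul_eq_mul]
      congr 4
      field_simp
    · rw [indicator_of_notMem hv, indicator_of_notMem hv, smul_zero]
  simp_rw [e]
  rw [integral_indicator measurableSet_Ioc, ← intervalIntegral.integral_of_le (by positivity)]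
  have hi : IntervalIntegrable (fun v : ℝ => Complex.exp (((-((4 * N + 1) * v) : ℝ) : ℂ) * Complex.I)
         * (FF v : ℂ)) volume 0 (π / 2) := by
    apply ContinuousOn.intervalIntegrable
    rw [uIcc_pi]
    apply ContinuousOn.mul
    · fun_prop
    · exact Complex.continuous_ofReal.comp_continuousOn FF_cont
  have := Complex.reCLM.intervalIntegral_comp_comm hi
  simp only [Complex.reCLM_apply] at this
  rw [← this]
  congr 1
  ext v
  rw [Complex.re_mul_ofReal, Complex.exp_ofReal_mul_I_re, cos_neg, mul_comm]

lemma int_sq_sin (m : ℕ) (hm : m ≠ 0) : ∫ t in (0)..(π / 2), t ^ 2 * sin (2 * m * t) =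
    -(π ^ 2 / 4) * (-1) ^ m / (2 * m) + ((-1) ^ m - 1) / (4 * m ^ 3) := by
  have hm' : (m : ℝ) ≠ 0 := by exact_mod_cast hm
  have h : ∀ t ∈ uIcc 0 (π / 2), HasDerivAt (fun t : ℝ => -(t ^ 2 * cos (2 * m * t)) / (2 * m)
      + t * sin (2 * m * t) / (2 * m ^ 2) + cos (2 * m * t) / (4 * m ^ 3))
      (t ^ 2 * sin (2 * m * t)) t := by
    intro t _
    have hl : HasDerivAt (fun t : ℝ => 2 * m * t) (2 * m) t := by
      simpa using (hasDerivAt_id t).const_mul (2 * m : ℝ)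
    have := (((((hasDerivAt_pow 2 t).mul hl.cos).neg).div_const (2 * m : ℝ)).add
      (((hasDerivAt_id t).mul hl.sin).div_const (2 * m ^ 2 : ℝ))).add
      (hl.cos.div_const (4 * m ^ 3 : ℝ))
    refine HasDerivAt.congr_deriv this ?_
    simp
    field_simp
    ring
  rw [intervalIntegral.integral_eq_sub_of_hasDerivAt h]
  · have e : 2 * (m : ℝ) * (π / 2) = m * π := by ring
    rw [e, cos_nat_mul_pi, sin_nat_mul_pi]
    simp
    field_simp
    ring
  · apply Continuous.intervalIntegrable
    fun_prop

lemma trig_step (j : ℕ) (t : ℝ) (ht : sin t ≠ 0) :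
    FF t * cos ((4 * j + 1) * t) - FF t * cos ((4 * (j + 1 : ℕ) + 1) * t) =
    2 * (t ^ 2 * sin (2 * (2 * j + 1 : ℕ) * t)) + 2 * (t ^ 2 * sin (2 * (2 * j + 2 : ℕ) * t)) := by
  rw [FF_eq]
  push_cast
  have e1 : cos ((4 * j + 1) * t) - cos ((4 * j + 3) * t) = 2 * sin t * sin (2 * (2 * j + 1) * t) := by
    rw [show (4 * (j : ℝ) + 1) * t = 2 * (2 * j + 1) * t - t by ring,
      show (4 * (j : ℝ) + 3) * t = 2 * (2 * j + 1) * t + t by ring, cos_sub, cos_add]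
    ring
  have e2 : cos ((4 * j + 3) * t) - cos ((4 * (j + 1) + 1) * t) =
      2 * sin t * sin (2 * (2 * j + 2) * t) := by
    rw [show (4 * (j : ℝ) + 3) * t = 2 * (2 * j + 2) * t - t by ring,
      show (4 * ((j : ℝ) + 1) + 1) * t = 2 * (2 * j + 2) * t + t by ring, cos_sub, cos_add]
    ring
  have e3 : t ^ 2 / sin t * (2 * sin t) = 2 * t ^ 2 := by field_simp
  linear_combination (t ^ 2 / sin t) * (e1 + e2) + (sin (2 * (2 * j + 1) * t) + sin (2 * (2 * j + 2) * t)) * e3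

lemma int_step (j : ℕ) :
    (∫ t in (0)..(π / 2), FF t * cos ((4 * j + 1) * t)) -
      (∫ t in (0)..(π / 2), FF t * cos ((4 * (j + 1 : ℕ) + 1) * t)) =
    π ^ 2 / 4 * (1 / (2 * j + 1) - 1 / (2 * j + 2)) - 1 / (2 * j + 1) ^ 3 := by
  rw [← intervalIntegral.integral_sub (FFmul_int (by fun_prop)) (FFmul_int (by fun_prop))]
  have : ∫ t in (0)..(π / 2), (FF t * cos ((4 * j + 1) * t) -
      FF t * cos ((4 * (j + 1 : ℕ) + 1) * t)) =
      ∫ t in (0)..(π / 2), (2 * (t ^ 2 * sin (2 * (2 * j + 1 : ℕ) * t)) +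
        2 * (t ^ 2 * sin (2 * (2 * j + 2 : ℕ) * t))) := by
    apply intervalIntegral.integral_congr_ae
    refine Eventually.of_forall fun t ht => ?_
    rw [uIoc_of_le (by positivity)] at ht
    exact trig_step j t (sin_pos' ht).ne'
  rw [this, intervalIntegral.integral_add (by apply Continuous.intervalIntegrable; fun_prop)
    (by apply Continuous.intervalIntegrable; fun_prop), intervalIntegral.integral_const_mul,
    intervalIntegral.integral_const_mul, int_sq_sin _ (by omega), int_sq_sin _ (by omega)]
  have e1 : (-1 : ℝ) ^ (2 * j + 1) = -1 := Odd.neg_one_pow ⟨j, rfl⟩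
  have e2 : (-1 : ℝ) ^ (2 * j + 2) = 1 := Even.neg_one_pow ⟨j + 1, by ring⟩
  rw [e1, e2]
  push_cast
  field_simp
  ring

lemma sum_step (N : ℕ) :
    (∫ t in (0)..(π / 2), FF t * cos t) - (∫ t in (0)..(π / 2), FF t * cos ((4 * N + 1) * t)) =
    π ^ 2 / 4 * (∑ j ∈ Finset.range N, (1 / (2 * j + 1) - 1 / (2 * j + 2) : ℝ))
      - ∑ j ∈ Finset.range N, (1 / (2 * j + 1) ^ 3 : ℝ) := by
  rw [Finset.mul_sum, ← Finset.sum_sub_distrib, ← Finset.sum_congr rfl (fun j _ => int_step j),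
    Finset.sum_range_sub' (fun j : ℕ => ∫ t in (0)..(π / 2), FF t * cos ((4 * j + 1) * t))]
  simp

lemma alt_harm (N : ℕ) : ∑ j ∈ Finset.range N, (1 / (2 * j + 1) - 1 / (2 * j + 2) : ℝ) =
    (harmonic (2 * N) : ℝ) - harmonic N := by
  induction N with
  | zero => simp
  | succ N ih =>
    rw [Finset.sum_range_succ, ih, show 2 * (N + 1) = 2 * N + 1 + 1 by ring, harmonic_succ,
      harmonic_succ, harmonic_succ]
    push_cast
    field_simp
    ring

lemma alt_tendsto : Tendsto (fun N => ∑ j ∈ Finset.range N, (1 / (2 * j + 1) - 1 / (2 * j + 2) : ℝ))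
    atTop (𝓝 (log 2)) := by
  have h := Real.tendsto_harmonic_sub_log
  have h2 := h.comp (tendsto_id.const_mul_atTop' (show 0 < 2 by norm_num))
  have h3 := (h2.sub h).add_const (log 2)
  simp only [sub_self, zero_add] at h3
  refine h3.congr' ?_
  filter_upwards [eventually_gt_atTop 0] with N hN
  have hN' : (N : ℝ) ≠ 0 := by exact_mod_cast hN.ne'
  rw [alt_harm]
  simp only [Function.comp_apply, id]
  push_cast
  rw [log_mul (by norm_num) hN']
  ring

lemma zeta_sum : Summable (fun n : ℕ => 1 / ((n : ℝ) + 1) ^ 3) := by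
  have := (summable_nat_add_iff 1).2 (Real.summable_one_div_nat_pow.2 (show 1 < 3 by norm_num))
  simpa using this

lemma odd_hasSum : HasSum (fun j : ℕ => (1 / (2 * j + 1) ^ 3 : ℝ))
    (7 / 8 * ∑' n : ℕ, 1 / ((n : ℝ) + 1) ^ 3) := by
  have h1 : Summable (fun j : ℕ => (1 / (2 * j + 1) ^ 3 : ℝ)) := by
    refine zeta_sum.of_nonneg_of_le (fun _ => by positivity) fun n => ?_
    gcongr
    linarith [(Nat.cast_nonneg n : (0 : ℝ) ≤ n)]
  have h2 : HasSum (fun j : ℕ => 1 / ((2 * (j : ℝ) + 1) + 1) ^ 3)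
      (1 / 8 * ∑' n : ℕ, 1 / ((n : ℝ) + 1) ^ 3) := by
    have hf := zeta_sum.hasSum.mul_left (1 / 8)
    have e : (fun j : ℕ => 1 / ((2 * (j : ℝ) + 1) + 1) ^ 3) =
        fun j : ℕ => 1 / 8 * (1 / ((j : ℝ) + 1) ^ 3) := by
      funext j
      rw [show 2 * (j : ℝ) + 1 + 1 = 2 * (j + 1) by ring, mul_pow]
      field_simp
      norm_num
    rw [e]
    exact hf
  have h3 : HasSum (fun n : ℕ => 1 / ((n : ℝ) + 1) ^ 3)
      ((∑' j : ℕ, (1 / (2 * j + 1) ^ 3 : ℝ)) + 1 / 8 * ∑' n : ℕ, 1 / ((n : ℝ) + 1) ^ 3) := by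
    apply HasSum.even_add_odd
    · push_cast
      exact h1.hasSum
    · push_cast
      exact h2
  have h4 := h3.tsum_eq
  convert h1.hasSum using 1
  linarith

lemma integral_val : ∫ t in (0)..(π / 2), FF t * cos t =
    π ^ 2 * log 2 / 4 - 7 / 8 * ∑' n : ℕ, 1 / ((n : ℝ) + 1) ^ 3 := by
  have h1 := rl.const_sub (∫ t in (0)..(π / 2), FF t * cos t)
  simp_rw [sum_step, sub_zero] at h1
  have h2 := (alt_tendsto.const_mul (π ^ 2 / 4)).sub odd_hasSum.tendsto_sum_nat
  rw [tendsto_nhds_unique h1 h2]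
  ring

/-- `∑_{k≥1} 2^(2k-2) ((k-1)!)² / ((2k)! k) = π² ln 2 / 4 - (7/8) ζ(3)`
(written with `k = n+1`, and `ζ(3) = ∑_{n≥1} 1/n³`). -/
theorem sum_sq_nu_div_factorial_mul_k :
    ∑' n : ℕ, (2 : ℝ) ^ (2 * n) * (Nat.factorial n) ^ 2
        / (Nat.factorial (2 * (n + 1)) * (n + 1))
      = Real.pi ^ 2 * Real.log 2 / 4 - 7 / 8 * ∑' n : ℕ, 1 / ((n : ℝ) + 1) ^ 3 := by
  simp_rw [term_eq]
  rw [lhs_hasSum.tsum_eq, integral_val]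
end

section
/- Let X and Z be independent standard normal N(0,1) random variables, let r be a real number with |r| < 1, and set Y = r X + √(1 − r²) Z (so (X, Y) is bivariate Gaussian with standard normal marginals and correlation r). Then E( ln|X| · ln|Y| ) = μ² + ∑_{k=1}^∞ ν_{2k}² r^{2k} / (2k)!, where μ = −(ln 2 + γ)/2 and ν_{2k} = 2^{k−1} (k−1)!. Equivalently, ∫_ℝ∫_ℝ ln|x| · ln|r x + √(1−r²) z| f(x) f(z) dx dz = μ² + ∑_{k=1}^∞ ν_{2k}² r^{2k}/(2k)!, where f is the standard normal density. -/
open MeasureTheory Real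
open ProbabilityTheory Set Filter Topology

noncomputable def hK (x t : ℝ) : ℝ := t⁻¹ * (exp (-(1/2 * t)) - exp (-(x^2/2 * t)))

lemma hK_meas : Measurable (Function.uncurry hK) := by
  unfold hK Function.uncurry
  fun_prop

lemma exp_diff_bound {a b t : ℝ} (hab : a ≤ b) (ht : 0 < t) :
    |t⁻¹ * (exp (-(a * t)) - exp (-(b * t)))| ≤ (b - a) * exp (-a * t) := by
  have h1 : exp (-(b*t)) ≤ exp (-(a*t)) := by
    apply exp_le_exp.mpr; nlinarith
  have h2 : 1 - (b-a)*t ≤ exp (-((b-a)*t)) := by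
    have := add_one_le_exp (-((b-a)*t)); linarith
  have h3 : exp (-(b*t)) = exp (-(a*t)) * exp (-((b-a)*t)) := by
    rw [← exp_add]; ring_nf
  rw [abs_of_nonneg (mul_nonneg (by positivity) (by linarith)), inv_mul_le_iff₀ ht, h3,
    neg_mul]
  have := exp_pos (-(a*t))
  nlinarith

lemma exp_diff_int' {a b : ℝ} (ha : 0 < a) (hab : a ≤ b) :
    IntegrableOn (fun t => t⁻¹ * (exp (-(a * t)) - exp (-(b * t)))) (Ioi 0) := by
  refine Integrable.mono' ((exp_neg_integrableOn_Ioi 0 ha).const_mul (b-a)) ?_ ?_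
  · exact (by fun_prop : Measurable _).aestronglyMeasurable
  · filter_upwards [ae_restrict_mem measurableSet_Ioi] with t ht
    exact exp_diff_bound hab ht

lemma exp_diff_int {a b : ℝ} (ha : 0 < a) (hb : 0 < b) :
    IntegrableOn (fun t => t⁻¹ * (exp (-(a * t)) - exp (-(b * t)))) (Ioi 0) := by
  rcases le_total a b with h | h
  · exact exp_diff_int' ha h
  · refine (exp_diff_int' hb h).neg.congr ?_
    refine ae_of_all _ fun t => ?_
    simp only [Pi.neg_apply]; ring

lemma hK_int {x : ℝ} (hx : x ≠ 0) : IntegrableOn (hK x) (Ioi 0) :=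
  exp_diff_int (by norm_num) (by positivity)

lemma hK_integral {x : ℝ} (hx : x ≠ 0) : ∫ t in Ioi 0, hK x t = 2 * log |x| := by
  have h := Frullani.integral_Ioi_eq (f := fun u : ℝ => exp (-u)) (a := 1/2) (b := x^2/2)
    (L := 1) (R := 0) ?_ (by norm_num) (by positivity) ?_ ?_ ?_
  · have e : x^2/2/(1/2) = |x|^2 := by rw [sq_abs]; ring
    rw [e, log_pow] at h
    simpa [hK] using h
  · exact (by fun_prop : Continuous fun u : ℝ => exp (-u)).locallyIntegrable.locallyIntegrableOn _
  · have : Tendsto (fun u : ℝ => exp (-u)) (𝓝 0) (𝓝 (exp (-0))) :=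
      (by fun_prop : Continuous fun u : ℝ => exp (-u)).tendsto 0
    simp only [neg_zero, exp_zero] at this
    exact this.mono_left nhdsWithin_le_nhds
  · exact tendsto_exp_neg_atTop_nhds_zero
  · exact hK_int hx

lemma hK_integral_norm {x : ℝ} (hx : x ≠ 0) : ∫ t in Ioi 0, ‖hK x t‖ = abs (2 * log |x|) := by
  rw [← hK_integral hx]
  rcases le_total 1 (x^2) with h | h
  · have h0 : ∀ t ∈ Ioi (0:ℝ), 0 ≤ hK x t := by
      intro t ht
      have ht' : 0 < t := ht
      refine mul_nonneg (by positivity) (sub_nonneg.mpr (exp_le_exp.mpr ?_))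
      nlinarith
    rw [abs_of_nonneg (setIntegral_nonneg measurableSet_Ioi h0)]
    exact setIntegral_congr_fun measurableSet_Ioi fun t ht => norm_of_nonneg (h0 t ht)
  · have h0 : ∀ t ∈ Ioi (0:ℝ), hK x t ≤ 0 := by
      intro t ht
      have ht' : 0 < t := ht
      refine mul_nonpos_of_nonneg_of_nonpos (by positivity) (sub_nonpos.mpr (exp_le_exp.mpr ?_))
      nlinarith
    rw [abs_of_nonpos (setIntegral_nonpos measurableSet_Ioi h0), ← integral_neg]
    exact setIntegral_congr_fun measurableSet_Ioi fun t ht => norm_of_nonpos (h0 t ht)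

noncomputable abbrev gG : Measure ℝ := gaussianReal 0 1

lemma gG_integral (f : ℝ → ℝ) :
    ∫ x, f x ∂gG = ∫ x, (√(2 * π))⁻¹ * exp (-x^2/2) * f x := by
  rw [integral_gaussianReal_eq_integral_smul one_ne_zero]
  simp [gaussianPDFReal]

lemma log_sq_bound {x : ℝ} (hx : 0 < x) : (log x)^2 ≤ 16 * (x ^ (-(1/2) : ℝ) + x ^ (1/2:ℝ)) := by
  have h1 := log_le_rpow_div hx.le (show (0:ℝ) < 1/4 by norm_num)
  have h2 := log_le_rpow_div (inv_pos.mpr hx).le (show (0:ℝ) < 1/4 by norm_num)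
  rw [log_inv, inv_rpow hx.le, ← rpow_neg hx.le] at h2
  have e1 : x ^ (1/2:ℝ) = (x^(1/4:ℝ))^2 := by
    rw [← rpow_natCast, ← rpow_mul hx.le]; norm_num
  have e2 : x ^ (-(1/2):ℝ) = (x^(-(1/4):ℝ))^2 := by
    rw [← rpow_natCast, ← rpow_mul hx.le]; norm_num
  rw [e1, e2]
  have p1 := rpow_pos_of_pos hx (1/4)
  have p2 := rpow_pos_of_pos hx (-(1/4))
  rcases le_total 0 (log x) with h | h
  · nlinarith
  · nlinarith

lemma log_memLp : MemLp (fun x : ℝ => log |x|) 2 gG := by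
  have hm : Measurable fun x : ℝ => log |x| := by fun_prop
  rw [memLp_two_iff_integrable_sq hm.aestronglyMeasurable]
  rw [gG, gaussianReal_of_var_ne_zero _ one_ne_zero,
    integrable_withDensity_iff_integrable_smul' (measurable_gaussianPDF _ _)
      (ae_of_all _ fun _ ↦ gaussianPDF_lt_top)]
  simp only [toReal_gaussianPDF]
  have key : IntegrableOn (fun x => gaussianPDFReal 0 1 x • log |x| ^ 2) (Ioi 0) := by
    have i1 := integrableOn_rpow_mul_exp_neg_mul_sq (b := 1/2) (by norm_num) (s := -(1/2)) (by norm_num)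
    have i2 := integrableOn_rpow_mul_exp_neg_mul_sq (b := 1/2) (by norm_num) (s := (1/2)) (by norm_num)
    refine Integrable.mono' ((i1.add i2).const_mul ((√(2 * π))⁻¹ * 16)) ?_ ?_
    · exact ((measurable_gaussianPDFReal _ _).mul (hm.pow_const 2)).aestronglyMeasurable
    · filter_upwards [ae_restrict_mem measurableSet_Ioi] with x hx
      have hx' : 0 < x := hx
      have := log_sq_bound hx'
      rw [smul_eq_mul, norm_of_nonneg (mul_nonneg (gaussianPDFReal_nonneg _ _ _) (sq_nonneg _)), abs_of_pos hx']
      simp only [gaussianPDFReal, Pi.add_apply, NNReal.coe_one, mul_one, sub_zero]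
      have e : -x^2/2 = -(1/2) * x^2 := by ring
      rw [e]
      calc _ ≤ (√(2 * π))⁻¹ * rexp (-(1 / 2) * x ^ 2) * (16 * (x ^ (-(1/2) : ℝ) + x ^ (1/2:ℝ))) := by gcongr
        _ = _ := by ring
  have key2 : IntegrableOn (fun x => gaussianPDFReal 0 1 x • log |x| ^ 2) (Iic 0) := by
    rw [← Measure.map_neg_eq_self (volume : Measure ℝ)]
    let m : MeasurableEmbedding fun x : ℝ => -x := (Homeomorph.neg ℝ).measurableEmbedding
    rw [m.integrableOn_map_iff]
    have : ((fun x => gaussianPDFReal 0 1 x • log |x| ^ 2) ∘ fun x => -x) = (fun x => gaussianPDFReal 0 1 x • log |x| ^ 2) := by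
      ext x; simp [gaussianPDFReal]
    rw [this]
    simp only [neg_preimage, neg_Iic, neg_zero]
    exact Iff.mpr integrableOn_Ici_iff_integrableOn_Ioi key
  rw [← integrableOn_univ, ← Iic_union_Ioi (a := (0:ℝ))]
  exact key2.union key

lemma mapY (r : ℝ) (hr : |r| < 1) :
    MeasurePreserving (fun p : ℝ × ℝ => r * p.1 + √(1 - r^2) * p.2) (gG.prod gG) gG := by
  refine ⟨by fun_prop, ?_⟩
  have hr2 : r^2 < 1 := by rw [← sq_abs]; nlinarith [abs_nonneg r]
  have hi : IndepFun (fun p : ℝ × ℝ => r * p.1) (fun p : ℝ × ℝ => √(1 - r^2) * p.2) (gG.prod gG) :=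
    indepFun_prod (X := fun x : ℝ => r * x) (Y := fun x : ℝ => √(1-r^2) * x) (by fun_prop) (by fun_prop)
  have h1 : (gG.prod gG).map (fun p : ℝ × ℝ => r * p.1) = gaussianReal (r * 0) (NNReal.mk (r^2) (sq_nonneg r) * 1) := by
    rw [← gaussianReal_map_const_mul]
    have : (fun p : ℝ × ℝ => r * p.1) = (fun x => r * x) ∘ Prod.fst := rfl
    rw [this, ← Measure.map_map (by fun_prop) measurable_fst, Measure.map_fst_prod]; simp [gG]
  have h2 : (gG.prod gG).map (fun p : ℝ × ℝ => √(1-r^2) * p.2) = gaussianReal (√(1-r^2) * 0) (NNReal.mk (√(1-r^2)^2) (sq_nonneg _) * 1) := by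
    rw [← gaussianReal_map_const_mul]
    have : (fun p : ℝ × ℝ => √(1-r^2) * p.2) = (fun x => √(1-r^2) * x) ∘ Prod.snd := rfl
    rw [this, ← Measure.map_map (by fun_prop) measurable_snd, Measure.map_snd_prod]; simp [gG]
  have := gaussianReal_add_gaussianReal_of_indepFun hi h1 h2
  have e : (fun p : ℝ × ℝ => r * p.1) + (fun p : ℝ × ℝ => √(1-r^2) * p.2) = fun p : ℝ × ℝ => r * p.1 + √(1 - r^2) * p.2 := rfl
  rw [e] at this
  rw [this, gG]
  congr 1
  · ring
  · ext
    push_cast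
    rw [sq_sqrt (by linarith)]
    ring

lemma gG_exp {a c : ℝ} (ha : 0 ≤ a) :
    ∫ x, exp (-a/2 * x^2 - c * x) ∂gG = (√(1 + a))⁻¹ * exp (c^2 / (2 * (1 + a))) := by
  rw [gG_integral]
  have ha' : 0 < 1 + a := by linarith
  have e : ∀ x : ℝ, (√(2 * π))⁻¹ * exp (-x^2/2) * exp (-a/2 * x^2 - c * x)
      = (√(2 * π))⁻¹ * exp (c^2 / (2 * (1 + a))) * exp (-((1+a)/2) * (x + c/(1+a))^2) := by
    intro x
    rw [mul_assoc, mul_assoc, ← exp_add, ← exp_add]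
    congr 2
    field_simp
    ring
  simp_rw [e]
  rw [integral_const_mul, integral_add_right_eq_self (fun x => exp (-((1+a)/2) * x^2)), integral_gaussian]
  have : π / ((1+a)/2) = (2 * π) / (1 + a) := by field_simp
  rw [this, sqrt_div (by positivity)]
  have : √(2*π) ≠ 0 := by positivity
  field_simp

lemma pair_exp {r s t : ℝ} (hr : |r| < 1) (hs : 0 ≤ s) (ht : 0 ≤ t) :
    ∫ x, ∫ z, exp (-(x^2/2 * s)) * exp (-((r * x + √(1 - r^2) * z)^2/2 * t)) ∂gG ∂gG
      = (√((1+s)*(1+t) - s*t*r^2))⁻¹ := by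
  have hr2 : r^2 < 1 := by rw [← sq_abs]; nlinarith [abs_nonneg r]
  obtain ⟨q, hq⟩ : ∃ q, q = √(1 - r^2) := ⟨_, rfl⟩
  have hq2 : q^2 = 1 - r^2 := by rw [hq, sq_sqrt (by linarith)]
  rw [← hq]
  have e1 : ∀ x z : ℝ, exp (-(x^2/2 * s)) * exp (-((r * x + q * z)^2/2 * t))
     = exp (-(s + t * r^2)/2 * x^2) * exp (-(t*q^2)/2 * z^2 - (t*r*q*x) * z) := by
    intro x z
    rw [← exp_add, ← exp_add]; ring_nf
  have hb : 0 < 1 + t * q^2 := by positivity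
  simp_rw [e1, integral_const_mul, gG_exp (show 0 ≤ t * q^2 by positivity)]
  have e2 : ∀ x : ℝ, exp (-(s + t * r^2)/2 * x^2) * ((√(1 + t*q^2))⁻¹ * exp ((t*r*q*x)^2 / (2 * (1 + t*q^2))))
    = (√(1 + t*q^2))⁻¹ * exp (-(s + t * r^2 / (1 + t * q^2))/2 * x^2 - 0 * x) := by
    intro x
    rw [mul_left_comm, ← exp_add]
    congr 2
    field_simp
    ring
  simp_rw [e2, integral_const_mul]
  rw [gG_exp (by positivity)]
  rw [← mul_assoc, ← mul_inv, ← sqrt_mul (by positivity)]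
  simp only [ne_eq, OfNat.ofNat_ne_zero, not_false_eq_true, zero_pow, zero_div, exp_zero, mul_one]
  congr 2
  field_simp
  rw [hq2]
  ring

lemma log_mean : ∫ x, log |x| ∂gG = -(log 2 + eulerMascheroniConstant)/2 := by
  have hc := Complex.hasDerivAt_GammaIntegral (s := 1/2) (by norm_num)
  have hg : HasDerivAt Complex.Gamma (∫ t : ℝ in Ioi 0, (t:ℂ) ^ ((1/2:ℂ) - 1) * (log t * exp (-t))) (1/2) := by
    refine hc.congr_of_eventuallyEq ?_
    have : ∀ᶠ s : ℂ in 𝓝 (1/2), 0 < s.re :=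
      (Complex.continuous_re.tendsto (1/2)).eventually_const_lt (by norm_num)
    filter_upwards [this] with s hs
    exact Complex.Gamma_eq_integral hs
  have h := hg.unique Complex.hasDerivAt_Gamma_one_half
  have h' : ∫ t in Ioi (0:ℝ), t ^ (-(1/2):ℝ) * (log t * exp (-t)) = -√π * (eulerMascheroniConstant + 2 * log 2) := by
    rw [← Complex.ofReal_inj, ← integral_complex_ofReal]
    have hrhs : ((-√π * (eulerMascheroniConstant + 2 * log 2) : ℝ) : ℂ) = -√π * (eulerMascheroniConstant + 2 * Complex.log 2) := by
      push_cast [Complex.ofReal_log]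
      simp
    rw [hrhs, ← h]
    refine setIntegral_congr_fun measurableSet_Ioi fun t ht => ?_
    have ht' : 0 < t := ht
    push_cast
    rw [Complex.ofReal_cpow ht'.le]
    norm_num
  have hgam : ∫ t in Ioi (0:ℝ), t ^ (-(1/2):ℝ) * exp (-t) = √π := by
    rw [← Gamma_one_half_eq, Gamma_eq_integral (by norm_num)]
    refine setIntegral_congr_fun measurableSet_Ioi fun t ht => ?_
    rw [mul_comm]; norm_num
  have hgi : IntegrableOn (fun t:ℝ => t ^ (-(1/2):ℝ) * exp (-t)) (Ioi 0) := by
    have := Real.GammaIntegral_convergent (s := 1/2) (by norm_num)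
    refine this.congr_fun (fun t ht => ?_) measurableSet_Ioi
    simp only
    rw [mul_comm]; norm_num
  have hli : IntegrableOn (fun t:ℝ => t ^ (-(1/2):ℝ) * (log t * exp (-t))) (Ioi 0) := by
    by_contra hn
    rw [integral_undef hn] at h'
    have h3 := one_half_lt_eulerMascheroniConstant
    have h4 : 0 < log 2 := log_pos (by norm_num)
    have h5 : 0 < √π := by positivity
    have : 0 < √π * (eulerMascheroniConstant + 2 * log 2) := by positivity
    linarith
  rw [gG_integral]
  have e0 : ∀ x:ℝ, (√(2 * π))⁻¹ * exp (-x^2/2) * log |x| = (fun y => (√(2 * π))⁻¹ * exp (-y^2/2) * log y) |x| := by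
    intro x; simp
  rw [integral_congr_ae (ae_of_all _ e0),
    integral_comp_abs (f := fun y => (√(2 * π))⁻¹ * exp (-y^2/2) * log y)]
  have hsub := integral_comp_rpow_Ioi_of_pos (p := 2) (by norm_num)
    (g := fun u : ℝ => (u/2) ^ (-(1/2):ℝ) * (log (u/2) * exp (-(u/2))) + log 2 * ((u/2) ^ (-(1/2):ℝ) * exp (-(u/2))))
  have hsc := integral_comp_mul_left_Ioi
    (fun u : ℝ => u ^ (-(1/2):ℝ) * (log u * exp (-u)) + log 2 * (u ^ (-(1/2):ℝ) * exp (-u))) 0 (show (0:ℝ) < 1/2 by norm_num)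
  rw [mul_zero, integral_add hli (hgi.const_mul _), integral_const_mul, h', hgam] at hsc
  have e1 : ∀ u : ℝ, 1/2 * u = u/2 := fun u => by ring
  simp_rw [e1] at hsc
  rw [hsc] at hsub
  have e2 : ∫ y in Ioi (0:ℝ), (√(2 * π))⁻¹ * exp (-y^2/2) * log y = 
    (√(2 * π))⁻¹ * (1/(4*√2)) * ∫ x in Ioi (0:ℝ), (2 * x ^ ((2:ℝ) - 1)) • ((x ^ (2:ℝ)/2) ^ (-(1/2):ℝ) * (log (x ^ (2:ℝ)/2) * exp (-(x ^ (2:ℝ)/2))) + log 2 * ((x ^ (2:ℝ)/2) ^ (-(1/2):ℝ) * exp (-(x ^ (2:ℝ)/2)))) := by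
    rw [← integral_const_mul]
    refine setIntegral_congr_fun measurableSet_Ioi fun x hx => ?_
    have hx' : 0 < x := hx
    have a1 : x ^ ((2:ℝ) - 1) = x := by norm_num
    have a2 : x ^ (2:ℝ) = x^2 := by norm_cast
    have a3 : (x^2/2) ^ (-(1/2):ℝ) = √2/x := by
      rw [rpow_neg (by positivity), ← sqrt_eq_rpow, sqrt_div (by positivity), sqrt_sq hx'.le, inv_div]
    have a4 : log (x^2/2) = 2 * log x - log 2 := by
      rw [log_div (by positivity) (by norm_num), log_pow]; norm_num
    have a5 : -(x^2/2) = -x^2/2 := by ring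
    rw [a1, a2, a3, a4, a5, smul_eq_mul]
    field_simp
    ring
  rw [e2, hsub]
  have hs2 : √(2*π) = √2 * √π := sqrt_mul (by norm_num) _
  rw [hs2, smul_eq_mul]
  have : √2 ^ 2 = 2 := sq_sqrt (by norm_num)
  have : √2 ≠ 0 := by positivity
  have : √π ≠ 0 := by positivity
  field_simp
  rw [sq_sqrt (by norm_num)]
  ring

noncomputable def bC (n : ℕ) : ℝ := Ring.choose ((1/2:ℝ) + n - 1) n

lemma bC_zero : bC 0 = 1 := by simp [bC]

lemma bC_mul_fact (n : ℕ) : (n.factorial : ℝ) * bC n = (ascPochhammer ℝ n).eval (1/2) := by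
  have h := Ring.factorial_nsmul_multichoose_eq_ascPochhammer (1/2:ℝ) n
  rw [nsmul_eq_mul] at h
  have : bC n = Ring.multichoose (1/2:ℝ) n := by
    rw [bC, Ring.choose]; congr 1; ring
  rw [this, h, Polynomial.ascPochhammer_smeval_eq_eval]

lemma bC_succ (n : ℕ) : bC (n+1) * (n+1) = bC n * (n + 1/2) := by
  have h1 := bC_mul_fact n
  have h2 := bC_mul_fact (n+1)
  rw [ascPochhammer_succ_eval, ← h1, Nat.factorial_succ] at h2
  push_cast at h2
  have : (n.factorial:ℝ) ≠ 0 := by positivity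
  apply mul_left_cancel₀ this
  linarith

lemma bC_nonneg (n : ℕ) : 0 ≤ bC n := by
  induction n with
  | zero => simp [bC_zero]
  | succ n ih =>
    have := bC_succ n
    have h : bC (n+1) = bC n * (n+1/2) / (n+1) := by field_simp; linarith
    rw [h]; positivity

lemma bC_hasSum {x : ℝ} (h0 : 0 ≤ x) (h1 : x < 1) :
    HasSum (fun n => bC (n+1) * x^(n+1)) ((√(1 - x))⁻¹ - 1) := by
  have h := (Real.one_div_one_sub_rpow_hasFPowerSeriesOnBall_zero (1/2)).hasSum (y := x) (by
    simp [enorm_eq_nnnorm]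
    rw [← NNReal.coe_lt_coe]; simpa [abs_of_nonneg h0] using h1)
  simp only [FormalMultilinearSeries.ofScalars_apply_eq, zero_add] at h
  rw [← sqrt_eq_rpow, one_div] at h
  have h' : HasSum (fun n => bC n * x^n) (√(1-x))⁻¹ := by
    simpa [bC] using h
  rw [← hasSum_nat_add_iff' 1] at h'
  simpa [bC_zero] using h'

noncomputable def aK (n : ℕ) (s : ℝ) : ℝ := s^n / (1+s)^(n+1) * (√(1+s))⁻¹

lemma aK_meas (n : ℕ) : Measurable (aK n) := by unfold aK; fun_prop

lemma aK_nonneg (n : ℕ) {s : ℝ} (hs : 0 ≤ s) : 0 ≤ aK n s := by unfold aK; positivity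

lemma aK_zero_deriv (s : ℝ) (hs : 0 ≤ s) : HasDerivAt (fun s => -2 * (√(1+s))⁻¹) (aK 0 s) s := by
  have hp : 0 < 1 + s := by linarith
  have h1 : HasDerivAt (fun s : ℝ => √(1+s)) (1 / (2 * √(1+s))) s :=
    ((hasDerivAt_id s).const_add 1).sqrt hp.ne'
  have := (h1.inv (by positivity)).const_mul (-2)
  refine this.congr_deriv ?_
  unfold aK
  have : √(1+s) ≠ 0 := by positivity
  rw [sq_sqrt hp.le]
  field_simp
  ring

lemma tendsto_inv_sqrt : Tendsto (fun s : ℝ => (√(1+s))⁻¹) atTop (𝓝 0) :=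
  (tendsto_sqrt_atTop.comp (tendsto_atTop_add_const_left _ 1 tendsto_id)).inv_tendsto_atTop

lemma aK_zero_int : IntegrableOn (aK 0) (Ioi 0) := by
  refine integrableOn_Ioi_deriv_of_nonneg' (l := -2 * 0) (fun s hs => aK_zero_deriv s hs)
    (fun s hs => aK_nonneg 0 (le_of_lt hs)) (tendsto_inv_sqrt.const_mul _)

lemma aK_zero_integral : ∫ s in Ioi 0, aK 0 s = 2 := by
  rw [integral_Ioi_of_hasDerivAt_of_tendsto' (m := -2 * 0) (fun s hs => aK_zero_deriv s hs) aK_zero_int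
    (tendsto_inv_sqrt.const_mul _)]
  simp

lemma aK_int (n : ℕ) : IntegrableOn (aK n) (Ioi 0) := by
  refine Integrable.mono' aK_zero_int (aK_meas n).aestronglyMeasurable ?_
  filter_upwards [ae_restrict_mem measurableSet_Ioi] with s hs
  have hs' : 0 < s := hs
  rw [norm_of_nonneg (aK_nonneg n hs'.le)]
  unfold aK
  have : s^n ≤ (1+s)^n := by gcongr; linarith
  gcongr ?_ * _
  rw [div_le_div_iff₀ (by positivity) (by positivity)]
  rw [pow_zero, zero_add, pow_one, one_mul, pow_succ]
  gcongr

lemma aK_step (n : ℕ) : (n + 1) * ∫ s in Ioi 0, aK n s = (n + 3/2) * ∫ s in Ioi 0, aK (n+1) s := by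
  have hd : ∀ s ∈ Ici (0:ℝ), HasDerivAt (fun s : ℝ => s^(n+1) / (1+s)^(n+1) * (√(1+s))⁻¹)
      ((n+1) * aK n s - (n+3/2) * aK (n+1) s) s := by
    intro s hs
    have hp : 0 < 1 + s := by have : 0 ≤ s := hs; linarith
    have h0 : HasDerivAt (fun s : ℝ => 1+s) 1 s := (hasDerivAt_id s).const_add 1
    have h1 : HasDerivAt (fun s : ℝ => √(1+s)) (1 / (2 * √(1+s))) s := h0.sqrt hp.ne'
    have h2 := ((hasDerivAt_pow (n+1) s).div (h0.pow (n+1)) (pow_pos hp _).ne').mul (h1.inv (by positivity))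
    refine h2.congr_deriv ?_
    unfold aK
    have : √(1+s) ≠ 0 := by positivity
    rw [sq_sqrt hp.le]
    push_cast
    simp only [Pi.pow_apply, Pi.inv_apply, Pi.div_apply]
    field_simp
    ring
  have hi : IntegrableOn (fun s => (n+1) * aK n s - (n+3/2) * aK (n+1) s) (Ioi 0) :=
    ((aK_int n).const_mul _).sub ((aK_int (n+1)).const_mul _)
  have ht : Tendsto (fun s : ℝ => s^(n+1) / (1+s)^(n+1) * (√(1+s))⁻¹) atTop (𝓝 0) := by
    refine squeeze_zero' ?_ ?_ tendsto_inv_sqrt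
    · filter_upwards [eventually_ge_atTop 0] with s hs
      positivity
    · filter_upwards [eventually_ge_atTop 0] with s hs
      refine mul_le_of_le_one_left (by positivity) ?_
      rw [div_le_one (by positivity)]
      gcongr; linarith
  have h := integral_Ioi_of_hasDerivAt_of_tendsto' hd hi ht
  rw [integral_sub ((aK_int n).const_mul _) ((aK_int (n+1)).const_mul _), integral_const_mul,
    integral_const_mul] at h
  simp at h
  linarith

lemma coeff (n : ℕ) : bC (n+1) * (∫ s in Ioi 0, aK n s)^2 =
    4 * (((2:ℝ)^n * n.factorial)^2 / (2*(n+1)).factorial) := by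
  induction n with
  | zero =>
    rw [aK_zero_integral]
    have := bC_succ 0
    rw [bC_zero] at this
    norm_num at this ⊢
    rw [this]; norm_num
  | succ n ih =>
    have h1 := bC_succ (n+1)
    have h2 := aK_step n
    push_cast at h1
    have e1 : bC (n+1+1) = bC (n+1) * (n+3/2) / (n+2) := by field_simp; linarith
    have e2 : ∫ s in Ioi 0, aK (n+1) s = (n+1) * (∫ s in Ioi 0, aK n s) / (n+3/2) := by
      field_simp; linarith
    have e3 : bC (n+1+1) * (∫ s in Ioi 0, aK (n+1) s)^2
      = (bC (n+1) * (∫ s in Ioi 0, aK n s)^2) * ((n+1)^2 / ((n+3/2) * (n+2))) := by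
      rw [e1, e2]; field_simp
    rw [e3, ih]
    have e4 : 2 * (n+1+1) = 2*(n+1) + 1 + 1 := by ring
    rw [e4, Nat.factorial_succ (2*(n+1)+1), Nat.factorial_succ (2*(n+1)), Nat.factorial_succ n]
    push_cast
    field_simp
    ring

lemma coeff_le (n : ℕ) : ((2:ℝ)^n * n.factorial)^2 / (2*(n+1)).factorial ≤ 1 := by
  induction n with
  | zero => norm_num
  | succ n ih =>
    have e4 : 2 * (n+1+1) = 2*(n+1) + 1 + 1 := by ring
    rw [e4, Nat.factorial_succ (2*(n+1)+1), Nat.factorial_succ (2*(n+1)), Nat.factorial_succ n]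
    rw [div_le_one (by positivity)] at ih ⊢
    push_cast
    calc ((2:ℝ)^(n+1) * ((n+1) * n.factorial))^2 = (2*(n+1))^2 * ((2:ℝ)^n * n.factorial)^2 := by ring
      _ ≤ (2*(n+1))^2 * ((2*(n+1)).factorial : ℝ) := by gcongr
      _ ≤ ((2*((n:ℝ)+1)+1+1) * (2*(n+1)+1)) * ((2*(n+1)).factorial : ℝ) := by
          gcongr
          nlinarith [(Nat.cast_nonneg n : (0:ℝ) ≤ n)]
      _ = _ := by ring

lemma series_summable {r : ℝ} (hr : |r| < 1) :
    Summable fun n : ℕ => ((2 : ℝ) ^ n * Nat.factorial n) ^ 2 * r ^ (2 * (n + 1))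
            / Nat.factorial (2 * (n + 1)) := by
  have hr2 : r^2 < 1 := by rw [← sq_abs]; nlinarith [abs_nonneg r]
  have hg := (summable_nat_add_iff 1).mpr (summable_geometric_of_lt_one (sq_nonneg r) hr2)
  refine Summable.of_nonneg_of_le (fun n => ?_) (fun n => ?_) hg
  · rw [pow_mul]; positivity
  · rw [pow_mul, mul_div_right_comm]
    exact mul_le_of_le_one_left (by positivity) (coeff_le n)

lemma kernel_hasSum {r s t : ℝ} (hr : |r| < 1) (hs : 0 < s) (ht : 0 < t) :
    HasSum (fun n : ℕ => bC (n+1) * r^(2*(n+1)) * (aK n s * aK n t))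
      (s⁻¹ * t⁻¹ * ((√((1+s)*(1+t) - s*t*r^2))⁻¹ - (√((1+s)*(1+t)))⁻¹)) := by
  have hr2 : r^2 < 1 := by rw [← sq_abs]; nlinarith [abs_nonneg r]
  have hx1 : s*t*r^2/((1+s)*(1+t)) < 1 := by
    rw [div_lt_one (by positivity)]
    nlinarith [mul_pos hs ht]
  have h := (bC_hasSum (x := s*t*r^2/((1+s)*(1+t))) (by positivity) hx1).mul_left
    (s⁻¹ * t⁻¹ * (√((1+s)*(1+t)))⁻¹)
  have e1 : (fun n : ℕ => bC (n+1) * r^(2*(n+1)) * (aK n s * aK n t)) = fun n : ℕ =>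
      s⁻¹ * t⁻¹ * (√((1 + s) * (1 + t)))⁻¹ *
        (bC (n + 1) * (s * t * r ^ 2 / ((1 + s) * (1 + t))) ^ (n + 1)) := by
    ext n
    unfold aK
    rw [sqrt_mul (by positivity), div_pow, mul_pow, mul_pow, mul_pow, pow_mul]
    field_simp
    ring
  have e : (1+s)*(1+t) - s*t*r^2 = ((1+s)*(1+t)) * (1 - s*t*r^2/((1+s)*(1+t))) := by
    field_simp
  have e2 : s⁻¹ * t⁻¹ * ((√((1+s)*(1+t) - s*t*r^2))⁻¹ - (√((1+s)*(1+t)))⁻¹) =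
      s⁻¹ * t⁻¹ * (√((1 + s) * (1 + t)))⁻¹ *
        ((√(1 - s * t * r ^ 2 / ((1 + s) * (1 + t))))⁻¹ - 1) := by
    rw [e, sqrt_mul (by positivity), mul_inv]
    ring
  rw [e1, e2]
  exact h

lemma kernel_integral {r : ℝ} (hr : |r| < 1) :
    ∫ w, (w.1⁻¹ * w.2⁻¹ * ((√((1+w.1)*(1+w.2) - w.1*w.2*r^2))⁻¹ - (√((1+w.1)*(1+w.2)))⁻¹))
      ∂((volume.restrict (Ioi (0:ℝ))).prod (volume.restrict (Ioi (0:ℝ)))) =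
    4 * ∑' n : ℕ, ((2 : ℝ) ^ n * Nat.factorial n) ^ 2 * r ^ (2 * (n + 1))
            / Nat.factorial (2 * (n + 1)) := by
  set ν := volume.restrict (Ioi (0:ℝ))
  have hae : ∀ᵐ w ∂(ν.prod ν), 0 < w.1 ∧ 0 < w.2 := by
    have h1 : ∀ᵐ s ∂ν, 0 < s := ae_restrict_mem measurableSet_Ioi
    have a1 := (Measure.quasiMeasurePreserving_fst (μ := ν) (ν := ν)).ae h1
    have a2 := (Measure.quasiMeasurePreserving_snd (μ := ν) (ν := ν)).ae h1
    filter_upwards [a1, a2] with w h1 h2 using ⟨h1, h2⟩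
  have hF : ∀ n : ℕ, ∫ w, bC (n+1) * r^(2*(n+1)) * (aK n w.1 * aK n w.2) ∂(ν.prod ν)
     = 4 * (((2 : ℝ) ^ n * Nat.factorial n) ^ 2 * r ^ (2 * (n + 1))
            / Nat.factorial (2 * (n + 1))) := by
    intro n
    rw [integral_const_mul, integral_prod_mul]
    have := coeff n
    calc _ = r^(2*(n+1)) * (bC (n+1) * (∫ s in Ioi 0, aK n s)^2) := by ring
      _ = _ := by rw [this]; ring
  have h := hasSum_integral_of_summable_integral_norm (μ := ν.prod ν)
    (F := fun (n : ℕ) (w : ℝ × ℝ) => bC (n+1) * r^(2*(n+1)) * (aK n w.1 * aK n w.2)) ?_ ?_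
  · have h2 := h.tsum_eq
    simp_rw [hF] at h2
    rw [tsum_mul_left] at h2
    rw [h2]
    refine integral_congr_ae ?_
    filter_upwards [hae] with w hw
    exact (kernel_hasSum hr hw.1 hw.2).tsum_eq.symm
  · intro n
    exact ((aK_int n).mul_prod (aK_int n)).const_mul _
  · have : ∀ n : ℕ, ∫ w, ‖bC (n+1) * r^(2*(n+1)) * (aK n w.1 * aK n w.2)‖ ∂(ν.prod ν)
      = 4 * (((2 : ℝ) ^ n * Nat.factorial n) ^ 2 * r ^ (2 * (n + 1))
            / Nat.factorial (2 * (n + 1))) := by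
      intro n
      rw [← hF n]
      refine integral_congr_ae ?_
      filter_upwards [hae] with w hw
      refine norm_of_nonneg ?_
      have := aK_nonneg n hw.1.le
      have := aK_nonneg n hw.2.le
      have := bC_nonneg (n+1)
      rw [pow_mul]
      positivity
    simp_rw [this]
    exact (series_summable hr).mul_left 4

noncomputable abbrev nuI : Measure ℝ := volume.restrict (Ioi (0:ℝ))

lemma ae_pos_nuI : ∀ᵐ w ∂(nuI.prod nuI), 0 < w.1 ∧ 0 < w.2 := by
  have h1 : ∀ᵐ s ∂nuI, 0 < s := ae_restrict_mem measurableSet_Ioi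
  have a1 := (Measure.quasiMeasurePreserving_fst (μ := nuI) (ν := nuI)).ae h1
  have a2 := (Measure.quasiMeasurePreserving_snd (μ := nuI) (ν := nuI)).ae h1
  filter_upwards [a1, a2] with w h1 h2 using ⟨h1, h2⟩

lemma gG_ne_zero : ∀ᵐ x ∂gG, x ≠ 0 := by
  have : NullSingletonClass gG := nullSingletonClass_gaussianReal one_ne_zero
  exact Measure.ae_ne gG 0

lemma ae_ne_pair (r : ℝ) (hr : |r| < 1) :
    ∀ᵐ p ∂(gG.prod gG), p.1 ≠ 0 ∧ r * p.1 + √(1 - r^2) * p.2 ≠ 0 := by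
  have a1 := (Measure.quasiMeasurePreserving_fst (μ := gG) (ν := gG)).ae gG_ne_zero
  have a2 := (mapY r hr).quasiMeasurePreserving.ae gG_ne_zero
  filter_upwards [a1, a2] with w h1 h2 using ⟨h1, h2⟩

lemma logs_integrable (r : ℝ) (hr : |r| < 1) :
    Integrable (fun p : ℝ × ℝ => log |p.1| * log |r * p.1 + √(1 - r^2) * p.2|) (gG.prod gG) := by
  have h1 : MemLp (fun p : ℝ × ℝ => log |p.1|) 2 (gG.prod gG) :=
    log_memLp.comp_measurePreserving measurePreserving_fst
  have h2 : MemLp (fun p : ℝ × ℝ => log |r * p.1 + √(1 - r^2) * p.2|) 2 (gG.prod gG) :=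
    log_memLp.comp_measurePreserving (mapY r hr)
  exact h1.integrable_mul h2

lemma big_integrable (r : ℝ) (hr : |r| < 1) :
    Integrable (fun w : (ℝ × ℝ) × (ℝ × ℝ) =>
      hK w.1.1 w.2.1 * hK (r * w.1.1 + √(1 - r^2) * w.1.2) w.2.2)
      ((gG.prod gG).prod (nuI.prod nuI)) := by
  have hm : Measurable (fun w : (ℝ × ℝ) × (ℝ × ℝ) =>
      hK w.1.1 w.2.1 * hK (r * w.1.1 + √(1 - r^2) * w.1.2) w.2.2) := by
    unfold hK; fun_prop
  rw [integrable_prod_iff hm.aestronglyMeasurable]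
  constructor
  · filter_upwards [ae_ne_pair r hr] with p hp
    exact (hK_int hp.1).mul_prod (hK_int hp.2)
  · refine ((logs_integrable r hr).norm.const_mul 4).congr ?_
    filter_upwards [ae_ne_pair r hr] with p hp
    simp only [norm_mul]
    rw [integral_prod_mul (fun s => ‖hK p.1 s‖) (fun t => ‖hK (r * p.1 + √(1 - r^2) * p.2) t‖)]
    rw [hK_integral_norm hp.1, hK_integral_norm hp.2, abs_mul, abs_mul]
    simp only [norm_eq_abs, abs_two]
    ring

noncomputable def phiK (r : ℝ) (w : ℝ × ℝ) : ℝ :=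
  ∫ p : ℝ × ℝ, hK p.1 w.1 * hK (r * p.1 + √(1 - r^2) * p.2) w.2 ∂(gG.prod gG)

lemma phiK_integrable (r : ℝ) (hr : |r| < 1) : Integrable (phiK r) (nuI.prod nuI) :=
  (big_integrable r hr).integral_prod_right

lemma phiK_integral (r : ℝ) (hr : |r| < 1) : ∫ w, phiK r w ∂(nuI.prod nuI) =
    4 * ∫ p : ℝ × ℝ, log |p.1| * log |r * p.1 + √(1 - r^2) * p.2| ∂(gG.prod gG) := by
  unfold phiK
  rw [← integral_integral_swap (f := fun (p w : ℝ × ℝ) =>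
    hK p.1 w.1 * hK (r * p.1 + √(1 - r^2) * p.2) w.2) (big_integrable r hr), ← integral_const_mul]
  refine integral_congr_ae ?_
  filter_upwards [ae_ne_pair r hr] with p hp
  rw [integral_prod_mul (fun s => hK p.1 s) (fun t => hK (r * p.1 + √(1 - r^2) * p.2) t),
    hK_integral hp.1, hK_integral hp.2]
  ring

lemma bdd_exp_integrable {α : Type*} [MeasurableSpace α] (μ : Measure α) [IsFiniteMeasure μ]
    {f : α → ℝ} (hf : Measurable f) (h0 : ∀ x, 0 ≤ f x) : Integrable (fun x => exp (-f x)) μ := by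
  refine Integrable.of_bound (C := 1) (by fun_prop) (ae_of_all _ fun x => ?_)
  rw [norm_of_nonneg (exp_pos _).le]
  exact exp_le_one_iff.mpr (by linarith [h0 x])

lemma phiK_eq (r : ℝ) (hr : |r| < 1) {s t : ℝ} (hs : 0 < s) (ht : 0 < t) :
    phiK r (s, t) = s⁻¹ * t⁻¹ * (exp (-(1/2*s)) * exp (-(1/2*t))
      - exp (-(1/2*t)) * (∫ x, exp (-(x^2/2*s)) ∂gG)
      - exp (-(1/2*s)) * (∫ x, exp (-(x^2/2*t)) ∂gG)
      + (√((1+s)*(1+t) - s*t*r^2))⁻¹) := by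
  have iX : Integrable (fun p : ℝ × ℝ => exp (-(p.1^2/2*s))) (gG.prod gG) :=
    bdd_exp_integrable _ (by fun_prop) (fun x => by positivity)
  have iY : Integrable (fun p : ℝ × ℝ => exp (-((r * p.1 + √(1 - r^2) * p.2)^2/2*t))) (gG.prod gG) :=
    bdd_exp_integrable _ (by fun_prop) (fun x => by positivity)
  have iXY : Integrable (fun p : ℝ × ℝ => exp (-(p.1^2/2*s)) *
      exp (-((r * p.1 + √(1 - r^2) * p.2)^2/2*t))) (gG.prod gG) := by
    have := bdd_exp_integrable (gG.prod gG)
      (f := fun p : ℝ × ℝ => p.1^2/2*s + (r * p.1 + √(1 - r^2) * p.2)^2/2*t)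
      (by fun_prop) (fun x => by positivity)
    refine this.congr (ae_of_all _ fun p => ?_)
    simp only [← exp_add]
    ring_nf
  have hX : ∫ p : ℝ × ℝ, exp (-(p.1^2/2*s)) ∂(gG.prod gG) = ∫ x, exp (-(x^2/2*s)) ∂gG := by
    rw [integral_fun_fst (fun x : ℝ => exp (-(x^2/2*s)))]; simp
  have hY : ∫ p : ℝ × ℝ, exp (-((r * p.1 + √(1 - r^2) * p.2)^2/2*t)) ∂(gG.prod gG)
      = ∫ x, exp (-(x^2/2*t)) ∂gG := by
    have h := integral_map (μ := gG.prod gG) (mapY r hr).measurable.aemeasurable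
      (f := fun x : ℝ => exp (-(x^2/2*t))) (by fun_prop)
    rw [(mapY r hr).map_eq] at h
    exact h.symm
  have hXY : ∫ p : ℝ × ℝ, exp (-(p.1^2/2*s)) * exp (-((r * p.1 + √(1 - r^2) * p.2)^2/2*t))
      ∂(gG.prod gG) = (√((1+s)*(1+t) - s*t*r^2))⁻¹ := by
    rw [integral_prod _ iXY, pair_exp hr hs.le ht.le]
  have e : ∀ p : ℝ × ℝ, hK p.1 s * hK (r * p.1 + √(1 - r^2) * p.2) t
      = s⁻¹ * t⁻¹ * (exp (-(1/2*s)) * exp (-(1/2*t))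
        - exp (-(1/2*t)) * exp (-(p.1^2/2*s))
        - exp (-(1/2*s)) * exp (-((r * p.1 + √(1 - r^2) * p.2)^2/2*t))
        + exp (-(p.1^2/2*s)) * exp (-((r * p.1 + √(1 - r^2) * p.2)^2/2*t))) := by
    intro p; unfold hK; ring
  unfold phiK
  simp only [e]
  rw [integral_const_mul, integral_add _ iXY, integral_sub _ (iY.const_mul _),
    integral_sub (integrable_const _) (iX.const_mul _), integral_const_mul (exp (-(1/2*t))),
    integral_const_mul (exp (-(1/2*s))) (fun p : ℝ × ℝ =>
      exp (-((r * p.1 + √(1 - r^2) * p.2)^2/2*t))),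
    hX, hY, hXY]
  · simp
  · exact (integrable_const _).sub (iX.const_mul _)
  · exact ((integrable_const _).sub (iX.const_mul _)).sub (iY.const_mul _)

lemma gG_main (r : ℝ) (hr : |r| < 1) :
    ∫ p : ℝ × ℝ, log |p.1| * log |r * p.1 + √(1 - r^2) * p.2| ∂(gG.prod gG)
    = (-(log 2 + eulerMascheroniConstant) / 2) ^ 2
        + ∑' n : ℕ, ((2 : ℝ) ^ n * Nat.factorial n) ^ 2 * r ^ (2 * (n + 1))
            / Nat.factorial (2 * (n + 1)) := by
  have h00 : |(0:ℝ)| < 1 := by simp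
  have h0 : ∫ p : ℝ × ℝ, log |p.1| * log |0 * p.1 + √(1 - 0^2) * p.2| ∂(gG.prod gG)
      = (-(log 2 + eulerMascheroniConstant) / 2) ^ 2 := by
    have : ∀ p : ℝ × ℝ, log |p.1| * log |0 * p.1 + √(1 - 0^2) * p.2| = log |p.1| * log |p.2| := by
      intro p; simp
    simp_rw [this]
    rw [integral_prod_mul (fun x => log |x|) (fun x => log |x|), log_mean]
    ring
  have hk := kernel_integral hr
  have hd : ∫ w, (phiK r w - phiK 0 w) ∂(nuI.prod nuI) =
     4 * ∑' n : ℕ, ((2 : ℝ) ^ n * Nat.factorial n) ^ 2 * r ^ (2 * (n + 1))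
            / Nat.factorial (2 * (n + 1)) := by
    rw [← hk]
    refine integral_congr_ae ?_
    filter_upwards [ae_pos_nuI] with w hw
    obtain ⟨s, t⟩ := w
    rw [phiK_eq r hr hw.1 hw.2, phiK_eq 0 h00 hw.1 hw.2]
    have : (1+s)*(1+t) - s*t*0^2 = (1+s)*(1+t) := by ring
    rw [this]
    ring
  rw [integral_sub (phiK_integrable r hr) (phiK_integrable 0 h00), phiK_integral r hr,
    phiK_integral 0 h00, h0] at hd
  linarith

/-- For a bivariate Gaussian pair with standard normal marginals and correlation `r`,
`E(ln|X| ln|Y|) = μ² + ∑_{k≥1} ν_{2k}² r^{2k}/(2k)!` where `μ = -(ln 2 + γ)/2` and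
`ν_{2k} = 2^(k-1) (k-1)!` (the sum is written with `k = n+1`). -/
theorem expectation_log_abs_mul_log_abs_gaussian (r : ℝ) (hr : |r| < 1) :
    ∫ x : ℝ, ∫ z : ℝ,
        Real.log |x| * Real.log |r * x + Real.sqrt (1 - r ^ 2) * z|
          * ((2 * Real.pi) ^ (-(1 : ℝ)/2) * Real.exp (-x ^ 2 / 2))
          * ((2 * Real.pi) ^ (-(1 : ℝ)/2) * Real.exp (-z ^ 2 / 2))
      = (-(Real.log 2 + Real.eulerMascheroniConstant) / 2) ^ 2
        + ∑' n : ℕ, ((2 : ℝ) ^ n * Nat.factorial n) ^ 2 * r ^ (2 * (n + 1))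
            / Nat.factorial (2 * (n + 1)) := by
  have h := gG_main r hr
  rw [integral_prod _ (logs_integrable r hr)] at h
  rw [← h, gG_integral]
  refine integral_congr_ae (ae_of_all _ fun x => ?_)
  simp only
  rw [gG_integral, ← integral_const_mul]
  refine integral_congr_ae (ae_of_all _ fun z => ?_)
  have e : (2 * Real.pi) ^ (-(1 : ℝ)/2) = (√(2 * π))⁻¹ := by
    rw [neg_div, rpow_neg (by positivity), ← sqrt_eq_rpow]
  simp only
  rw [e]
  ring
end

section
/- Let g(x) = (1/2) √(π/2) exp( −(1/4) e^z + z/2 ) where z = π x/√2 − γ and γ is the Euler–Mascheroni constant. Then the third moment satisfies ∫_ℝ x³ g(x) dx = −(28√2/π³) ζ(3), where ζ(3) = ∑_{n=1}^∞ 1/n³. In particular the distribution with density g is skewed to the left. -/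
open MeasureTheory Real

open Filter Topology Set in
lemma aux_summable : Summable (fun m : ℕ => 128 / ((m : ℝ) + 1) ^ 2) := by
  have h := (summable_nat_add_iff 1).mpr (Real.summable_one_div_nat_pow.mpr (by norm_num : 1 < 2))
  have h2 := h.mul_left 128
  refine h2.congr fun m => ?_
  push_cast
  ring

lemma aux_inv {m : ℕ} {x : ℝ} (hx : x ∈ Set.Ioo (1 / 4 : ℝ) 2) :
    0 < x + m ∧ 1 / (x + m) ≤ 4 / ((m : ℝ) + 1) := by
  have hm : (0 : ℝ) ≤ m := m.cast_nonneg
  have h1 : 0 < x + m := by linarith [hx.1]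
  refine ⟨h1, ?_⟩
  rw [div_le_div_iff₀ h1 (by positivity)]
  linarith [hx.1]

/-- terms of the log-Gamma series -/
noncomputable def lgT (m : ℕ) (x : ℝ) : ℝ :=
  (x - 1) * (Real.log ((m : ℝ) + 2) - Real.log ((m : ℝ) + 1)) + Real.log ((m : ℝ) + 1)
    - Real.log (x + m)

noncomputable def lgT1 (m : ℕ) (x : ℝ) : ℝ :=
  (Real.log ((m : ℝ) + 2) - Real.log ((m : ℝ) + 1)) - 1 / (x + m)

noncomputable def lgT2 (m : ℕ) (x : ℝ) : ℝ := 1 / (x + m) ^ 2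

noncomputable def lgT3 (m : ℕ) (x : ℝ) : ℝ := -2 / (x + m) ^ 3

lemma lgT_deriv (m : ℕ) {x : ℝ} (hx : x ∈ Set.Ioo (1 / 4 : ℝ) 2) :
    HasDerivAt (lgT m) (lgT1 m x) x := by
  have h := (aux_inv (m := m) hx).1
  unfold lgT lgT1
  have h0 := (hasDerivAt_id' x).add_const (m : ℝ)
  have h1 := h0.log h.ne'
  have h2 := (((hasDerivAt_id' x).sub_const 1).mul_const
    (Real.log ((m : ℝ) + 2) - Real.log ((m : ℝ) + 1))).add_const (Real.log ((m : ℝ) + 1))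
  convert! h2.sub h1 using 1
  ring

lemma lgT1_deriv (m : ℕ) {x : ℝ} (hx : x ∈ Set.Ioo (1 / 4 : ℝ) 2) :
    HasDerivAt (lgT1 m) (lgT2 m x) x := by
  have h := (aux_inv (m := m) hx).1
  unfold lgT1 lgT2
  have h0 := (hasDerivAt_id' x).add_const (m : ℝ)
  have h1 := (h0.inv h.ne').const_sub (Real.log ((m : ℝ) + 2) - Real.log ((m : ℝ) + 1))
  convert! h1 using 1
  · ext y; simp
  · ring

lemma lgT2_deriv (m : ℕ) {x : ℝ} (hx : x ∈ Set.Ioo (1 / 4 : ℝ) 2) :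
    HasDerivAt (lgT2 m) (lgT3 m x) x := by
  have h := (aux_inv (m := m) hx).1
  unfold lgT2 lgT3
  have h0 := (hasDerivAt_id' x).add_const (m : ℝ)
  have h1 := (h0.pow 2).inv (pow_ne_zero 2 h.ne')
  convert! h1 using 1
  · ext y; simp
  · simp; field_simp

lemma lgT1_bound (m : ℕ) {x : ℝ} (hx : x ∈ Set.Ioo (1 / 4 : ℝ) 2) :
    ‖lgT1 m x‖ ≤ 128 / ((m : ℝ) + 1) ^ 2 := by
  obtain ⟨h, -⟩ := aux_inv (m := m) hx
  have hm : (0 : ℝ) ≤ m := m.cast_nonneg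
  have e : Real.log ((m : ℝ) + 2) - Real.log ((m : ℝ) + 1) = Real.log (((m : ℝ) + 2) / (m + 1)) := by
    rw [Real.log_div (by positivity) (by positivity)]
  have l1 := Real.log_le_sub_one_of_pos (show 0 < ((m : ℝ) + 2) / (m + 1) by positivity)
  have l2 := Real.one_sub_inv_le_log_of_pos (show 0 < ((m : ℝ) + 2) / (m + 1) by positivity)
  rw [← e] at l1 l2
  have e1 : ((m : ℝ) + 2) / (m + 1) - 1 = 1 / (m + 1) := by field_simp; ring
  have e2 : 1 - (((m : ℝ) + 2) / (m + 1))⁻¹ = 1 / (m + 2) := by field_simp; ring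
  rw [e1] at l1
  rw [e2] at l2
  have b1 : 1 / ((m : ℝ) + 2) ≤ 1 / (x + m) := one_div_le_one_div_of_le h (by linarith [hx.2])
  have b2 : 1 / (x + m) ≤ 1 / ((m : ℝ) + 1 / 4) :=
    one_div_le_one_div_of_le (by positivity) (by linarith [hx.1])
  have b3 : 1 / ((m : ℝ) + 1) ≤ 1 / ((m : ℝ) + 1 / 4) :=
    one_div_le_one_div_of_le (by positivity) (by linarith)
  have b4 : 1 / ((m : ℝ) + 1 / 4) - 1 / ((m : ℝ) + 2) ≤ 128 / ((m : ℝ) + 1) ^ 2 := by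
    rw [div_sub_div _ _ (by positivity) (by positivity), div_le_div_iff₀ (by positivity) (by positivity)]
    nlinarith
  rw [Real.norm_eq_abs, abs_le, lgT1]
  constructor <;> linarith

lemma lgT2_bound (m : ℕ) {x : ℝ} (hx : x ∈ Set.Ioo (1 / 4 : ℝ) 2) :
    ‖lgT2 m x‖ ≤ 128 / ((m : ℝ) + 1) ^ 2 := by
  obtain ⟨h, h2⟩ := aux_inv (m := m) hx
  have hm : (0 : ℝ) ≤ m := m.cast_nonneg
  rw [lgT2, Real.norm_of_nonneg (by positivity)]
  have := pow_le_pow_left₀ (by positivity) h2 2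
  rw [div_pow, div_pow, one_pow] at this
  refine this.trans ?_
  gcongr
  norm_num

lemma lgT3_bound (m : ℕ) {x : ℝ} (hx : x ∈ Set.Ioo (1 / 4 : ℝ) 2) :
    ‖lgT3 m x‖ ≤ 128 / ((m : ℝ) + 1) ^ 2 := by
  obtain ⟨h, h2⟩ := aux_inv (m := m) hx
  have hm : (0 : ℝ) ≤ m := m.cast_nonneg
  rw [lgT3, neg_div, norm_neg, Real.norm_of_nonneg (by positivity)]
  have := pow_le_pow_left₀ (by positivity) h2 3
  rw [div_pow, div_pow, one_pow] at this
  have e : 2 / (x + m) ^ 3 = 2 * (1 / (x + m) ^ 3) := by ring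
  have : 2 / (x + m) ^ 3 ≤ 128 / ((m : ℝ) + 1) ^ 3 := by
    rw [e]; refine (mul_le_mul_of_nonneg_left this zero_le_two).trans (le_of_eq ?_); ring
  refine this.trans ?_
  gcongr 128 / ?_
  exact pow_le_pow_right₀ (by linarith) (by norm_num)

lemma one_mem_I : (1 : ℝ) ∈ Set.Ioo (1 / 4 : ℝ) 2 := by constructor <;> norm_num

lemma lgT_summable_one : Summable fun m => lgT m 1 := by
  have : (fun m => lgT m 1) = fun _ => 0 := by
    ext m; simp [lgT, add_comm]
  rw [this]; exact summable_zero

lemma lgT_tsum_deriv {x : ℝ} (hx : x ∈ Set.Ioo (1 / 4 : ℝ) 2) :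
    HasDerivAt (fun y => ∑' m, lgT m y) (∑' m, lgT1 m x) x :=
  hasDerivAt_tsum_of_isPreconnected aux_summable isOpen_Ioo isPreconnected_Ioo
    (fun n _ hy => lgT_deriv n hy) (fun n _ hy => lgT1_bound n hy) one_mem_I lgT_summable_one hx

lemma lgT1_tsum_deriv {x : ℝ} (hx : x ∈ Set.Ioo (1 / 4 : ℝ) 2) :
    HasDerivAt (fun y => ∑' m, lgT1 m y) (∑' m, lgT2 m x) x :=
  hasDerivAt_tsum_of_isPreconnected aux_summable isOpen_Ioo isPreconnected_Ioo
    (fun n _ hy => lgT1_deriv n hy) (fun n _ hy => lgT2_bound n hy) one_mem_I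
    (.of_norm_bounded aux_summable fun n => lgT1_bound n one_mem_I) hx

lemma lgT2_tsum_deriv {x : ℝ} (hx : x ∈ Set.Ioo (1 / 4 : ℝ) 2) :
    HasDerivAt (fun y => ∑' m, lgT2 m y) (∑' m, lgT3 m x) x :=
  hasDerivAt_tsum_of_isPreconnected aux_summable isOpen_Ioo isPreconnected_Ioo
    (fun n _ hy => lgT2_deriv n hy) (fun n _ hy => lgT3_bound n hy) one_mem_I
    (.of_norm_bounded aux_summable fun n => lgT2_bound n one_mem_I) hx

open Filter Topology in
lemma lgT_tsum {x : ℝ} (hx : x ∈ Set.Ioo (1 / 4 : ℝ) 2) :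
    ∑' m, lgT m x = Real.log (Real.Gamma x) := by
  have hs : Summable fun m => lgT m x :=
    summable_of_summable_hasDerivAt_of_isPreconnected aux_summable isOpen_Ioo isPreconnected_Ioo
    (fun n _ hy => lgT_deriv n hy) (fun n _ hy => lgT1_bound n hy) one_mem_I lgT_summable_one hx
  have h1 := (hs.hasSum.tendsto_sum_nat).comp (tendsto_add_atTop_nat 1)
  have h2 := Real.BohrMollerup.tendsto_log_gamma (show 0 < x by linarith [hx.1])
  have h3 := Real.tendsto_log_nat_add_one_sub_log
  have h4 := h3.comp (tendsto_add_atTop_nat 1)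
  have h5 := (h2.add (h3.const_mul x)).add (h4.const_mul (x - 1))
  rw [mul_zero, mul_zero, add_zero, add_zero] at h5
  refine tendsto_nhds_unique (h1.congr fun n => ?_) h5
  have key : ∀ n : ℕ, ∑ m ∈ Finset.range n, lgT m x
      = (x - 1) * Real.log ((n : ℝ) + 1) + Real.log (n.factorial : ℝ)
        - ∑ m ∈ Finset.range n, Real.log (x + m) := by
    intro n
    induction n with
    | zero => simp
    | succ k ih =>
      rw [Finset.sum_range_succ, Finset.sum_range_succ, ih, lgT, Nat.factorial_succ]
      push_cast
      rw [Real.log_mul (by positivity) (by positivity)]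
      ring_nf
  simp only [Function.comp_apply]
  rw [key, Real.BohrMollerup.logGammaSeq, Nat.factorial_succ]
  push_cast
  rw [Real.log_mul (by positivity) (by positivity)]
  ring

lemma lgT3_tsum : ∑' m, lgT3 m (1 / 2) = -14 * ∑' n : ℕ, 1 / ((n : ℝ) + 1) ^ 3 := by
  have h0 : Summable (fun n : ℕ => 1 / (n : ℝ) ^ 3) :=
    Real.summable_one_div_nat_pow.mpr (by norm_num)
  have h1 : Summable (fun n : ℕ => 1 / ((2 * n : ℕ) : ℝ) ^ 3) :=
    h0.comp_injective (i := fun n : ℕ => 2 * n) (fun a b h => by simpa using h)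
  have h2 : Summable (fun n : ℕ => 1 / ((2 * n + 1 : ℕ) : ℝ) ^ 3) :=
    h0.comp_injective (i := fun n : ℕ => 2 * n + 1) (fun a b h => by simpa using h)
  have h3 := tsum_even_add_odd (f := fun n : ℕ => 1 / (n : ℝ) ^ 3) h1 h2
  have h4 : ∑' n : ℕ, 1 / ((2 * n : ℕ) : ℝ) ^ 3 = 1 / 8 * ∑' n : ℕ, 1 / (n : ℝ) ^ 3 := by
    rw [← tsum_mul_left]
    refine tsum_congr fun n => ?_
    push_cast
    rw [mul_pow]; ring
  have h5 : ∑' n : ℕ, 1 / (n : ℝ) ^ 3 = ∑' n : ℕ, 1 / ((n : ℝ) + 1) ^ 3 := by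
    rw [h0.tsum_eq_zero_add]; simp
  have h6 : ∑' m, lgT3 m (1 / 2) = -16 * ∑' n : ℕ, 1 / ((2 * n + 1 : ℕ) : ℝ) ^ 3 := by
    rw [← tsum_mul_left]
    refine tsum_congr fun n => ?_
    rw [lgT3]
    push_cast
    have : (1 / 2 + (n : ℝ)) = (2 * n + 1) / 2 := by ring
    rw [this, div_pow]
    have : (2 * (n : ℝ) + 1) ≠ 0 := by positivity
    field_simp
    norm_num
  rw [h4] at h3
  rw [h6, ← h5]
  linarith

lemma lgT1_tsum : ∑' m, lgT1 m (1 / 2) = -(Real.eulerMascheroniConstant + Real.log 4) := by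
  have hI : (1 / 2 : ℝ) ∈ Set.Ioo (1 / 4 : ℝ) 2 := by constructor <;> norm_num
  have h1 := Real.hasDerivAt_Gamma_one_half.log (by rw [Real.Gamma_one_half_eq]; positivity)
  have h2 := (lgT_tsum_deriv hI).congr_of_eventuallyEq (f₁ := fun y => Real.log (Real.Gamma y)) (by
    filter_upwards [isOpen_Ioo.mem_nhds hI] with y hy using (lgT_tsum hy).symm)
  rw [h2.unique h1, Real.Gamma_one_half_eq, show (4 : ℝ) = 2 ^ 2 by norm_num, Real.log_pow]
  have : √π ≠ 0 := by positivity
  field_simp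
  push_cast; ring

noncomputable def gm : Measure ℝ :=
  (volume.restrict (Set.Ioi 0)).withDensity
    (fun u => ENNReal.ofReal (Real.exp (-u) * u ^ (-(1 / 2) : ℝ)))

lemma gm_integral (h : ℝ → ℝ) :
    ∫ u, h u ∂gm = ∫ u in Set.Ioi 0, Real.exp (-u) * u ^ (-(1 / 2) : ℝ) * h u := by
  rw [gm, integral_withDensity_eq_integral_toReal_smul (by fun_prop) (by simp)]
  refine setIntegral_congr_fun measurableSet_Ioi fun u hu => ?_
  have hu' : (0 : ℝ) < u := hu
  simp only [smul_eq_mul]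
  rw [ENNReal.toReal_ofReal (by positivity)]

lemma gm_integrable (h : ℝ → ℝ) :
    Integrable h gm ↔
      IntegrableOn (fun u => Real.exp (-u) * u ^ (-(1 / 2) : ℝ) * h u) (Set.Ioi 0) := by
  rw [gm, integrable_withDensity_iff_integrable_smul' (by fun_prop) (by simp)]
  refine integrableOn_congr_fun (fun u hu => ?_) measurableSet_Ioi
  have hu' : (0 : ℝ) < u := hu
  simp only [smul_eq_mul]
  rw [ENNReal.toReal_ofReal (by positivity)]

lemma gm_eq (c t : ℝ) {u : ℝ} (hu : 0 < u) :
    Real.exp (-u) * u ^ (-(1 / 2) : ℝ) * Real.exp (t * (c + Real.log u))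
      = Real.exp (c * t) * (Real.exp (-u) * u ^ ((1 / 2 + t) - 1)) := by
  rw [show (1 / 2 + t) - 1 = -(1 / 2) + t by ring, Real.rpow_add hu, Real.rpow_def_of_pos hu t,
    mul_add, Real.exp_add, mul_comm c t, mul_comm (Real.log u) t]
  ring

lemma gm_mgf (c : ℝ) {t : ℝ} (ht : -(1 / 2) < t) :
    ProbabilityTheory.mgf (fun u => c + Real.log u) gm t
      = Real.exp (c * t) * Real.Gamma (1 / 2 + t) := by
  rw [ProbabilityTheory.mgf, gm_integral, Real.Gamma_eq_integral (by linarith),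
    ← integral_const_mul]
  exact setIntegral_congr_fun measurableSet_Ioi fun u hu => gm_eq c t hu

lemma gm_exp (c : ℝ) {t : ℝ} (ht : -(1 / 2) < t) :
    t ∈ ProbabilityTheory.integrableExpSet (fun u => c + Real.log u) gm := by
  rw [ProbabilityTheory.integrableExpSet, Set.mem_ofPred_eq, gm_integrable]
  have h : IntegrableOn (fun u : ℝ => Real.exp (c * t) * (Real.exp (-u) * u ^ ((1 / 2 + t) - 1)))
      (Set.Ioi 0) := (Real.GammaIntegral_convergent (by linarith)).const_mul _
  exact h.congr_fun (fun u hu => (gm_eq c t hu).symm) measurableSet_Ioi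

lemma third_deriv (c : ℝ) (hc : c = Real.eulerMascheroniConstant + Real.log 4) :
    iteratedDeriv 3 (ProbabilityTheory.mgf (fun u => c + Real.log u) gm) 0
      = √π * ∑' m, lgT3 m (1 / 2) := by
  set S : ℝ → ℝ := fun y => ∑' m, lgT m y with hS
  set S1 : ℝ → ℝ := fun y => ∑' m, lgT1 m y with hS1
  set S2 : ℝ → ℝ := fun y => ∑' m, lgT2 m y with hS2
  set S3 : ℝ → ℝ := fun y => ∑' m, lgT3 m y with hS3
  set J : Set ℝ := Set.Ioo (-(1 / 4)) (1 / 4)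
  have hJo : IsOpen J := isOpen_Ioo
  have hJ : ∀ t ∈ J, 1 / 2 + t ∈ Set.Ioo (1 / 4 : ℝ) 2 := fun t ht => by
    constructor <;> linarith [ht.1, ht.2]
  have sh : ∀ t : ℝ, HasDerivAt (fun t : ℝ => 1 / 2 + t) 1 t := fun t =>
    (hasDerivAt_id' t).const_add _
  have d0 : ∀ t ∈ J, HasDerivAt (fun t => S (1 / 2 + t)) (S1 (1 / 2 + t)) t := fun t ht => by
    simpa using! (lgT_tsum_deriv (hJ t ht)).comp t (sh t)
  have d1 : ∀ t ∈ J, HasDerivAt (fun t => S1 (1 / 2 + t)) (S2 (1 / 2 + t)) t := fun t ht => by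
    simpa using! (lgT1_tsum_deriv (hJ t ht)).comp t (sh t)
  have d2 : ∀ t ∈ J, HasDerivAt (fun t => S2 (1 / 2 + t)) (S3 (1 / 2 + t)) t := fun t ht => by
    simpa using! (lgT2_tsum_deriv (hJ t ht)).comp t (sh t)
  set M : ℝ → ℝ := fun t => Real.exp (c * t + S (1 / 2 + t)) with hM
  have m0 : ∀ t ∈ J, HasDerivAt M (M t * (c + S1 (1 / 2 + t))) t := fun t ht => by
    have := (((hasDerivAt_id' t).const_mul c).add (d0 t ht)).exp
    rw [mul_one] at this
    exact this
  have m1 : ∀ t ∈ J, HasDerivAt (fun t => M t * (c + S1 (1 / 2 + t)))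
      (M t * ((c + S1 (1 / 2 + t)) ^ 2 + S2 (1 / 2 + t))) t := fun t ht => by
    have := (m0 t ht).mul ((d1 t ht).const_add c)
    convert! this using 1
    ring
  have m2 : ∀ t ∈ J, HasDerivAt (fun t => M t * ((c + S1 (1 / 2 + t)) ^ 2 + S2 (1 / 2 + t)))
      (M t * ((c + S1 (1 / 2 + t)) ^ 3 + 3 * (c + S1 (1 / 2 + t)) * S2 (1 / 2 + t)
        + S3 (1 / 2 + t))) t := fun t ht => by
    have := (m0 t ht).mul ((((d1 t ht).const_add c).pow 2).add (d2 t ht))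
    convert! this using 1
    simp
    ring
  have e0 : ∀ t ∈ J, ProbabilityTheory.mgf (fun u => c + Real.log u) gm t = M t := fun t ht => by
    rw [gm_mgf c (by linarith [ht.1]), hM]
    simp only
    rw [Real.exp_add, hS]
    simp only
    rw [lgT_tsum (hJ t ht), Real.exp_log (Real.Gamma_pos_of_pos (by linarith [ht.1]))]
  have nx : ∀ (f g g' : ℝ → ℝ), (∀ t ∈ J, f t = g t) → (∀ t ∈ J, HasDerivAt g (g' t) t) →
      ∀ t ∈ J, deriv f t = g' t := fun f g g' h1 h2 t ht => by
    refine HasDerivAt.deriv ((h2 t ht).congr_of_eventuallyEq ?_)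
    filter_upwards [hJo.mem_nhds ht] with y hy using h1 y hy
  have z : (0 : ℝ) ∈ J := by constructor <;> norm_num
  have f3 := nx _ _ _ (nx _ _ _ (nx _ _ _ e0 m0) m1) m2 0 z
  rw [iteratedDeriv_succ, iteratedDeriv_succ, iteratedDeriv_one, f3]
  have c0 : c + S1 (1 / 2 + 0) = 0 := by
    rw [hS1]; simp only [add_zero]; rw [lgT1_tsum, hc]; ring
  have M0 : M 0 = √π := by
    rw [← e0 0 z, gm_mgf c (by norm_num), add_zero, Real.Gamma_one_half_eq]; simp
  rw [c0, M0, add_zero]; ring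

lemma gm_moment (c : ℝ) (hc : c = Real.eulerMascheroniConstant + Real.log 4) :
    ∫ u in Set.Ioi 0, Real.exp (-u) * u ^ (-(1 / 2) : ℝ) * (c + Real.log u) ^ 3
      = √π * (-14 * ∑' n : ℕ, 1 / ((n : ℝ) + 1) ^ 3) := by
  have h0 : (0 : ℝ) ∈ interior
      (ProbabilityTheory.integrableExpSet (fun u => c + Real.log u) gm) := by
    rw [mem_interior]
    exact ⟨Set.Ioi (-(1 / 2)), fun t ht => gm_exp c ht, isOpen_Ioi, by norm_num⟩
  have h := ProbabilityTheory.iteratedDeriv_mgf_zero h0 3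
  rw [third_deriv c hc, lgT3_tsum] at h
  rw [h, ← gm_integral]
  rfl

theorem gumbel_density_third_moment :
    ∫ x : ℝ, x ^ 3 * ((1 / 2) * Real.sqrt (Real.pi / 2)
        * Real.exp (-(1 / 4) * Real.exp (Real.pi * x / Real.sqrt 2
            - Real.eulerMascheroniConstant)
          + (Real.pi * x / Real.sqrt 2 - Real.eulerMascheroniConstant) / 2))
      = -(28 * Real.sqrt 2 / Real.pi ^ 3) * ∑' n : ℕ, 1 / ((n : ℝ) + 1) ^ 3 := by
  set γ := Real.eulerMascheroniConstant with hγ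
  set Z := ∑' n : ℕ, 1 / ((n : ℝ) + 1) ^ 3
  have hm := gm_moment (γ + Real.log 4) rfl
  have hpi := Real.pi_pos
  have h2 : (0 : ℝ) < √2 := by positivity
  have hsp : (0 : ℝ) < √π := by positivity
  set f : ℝ → ℝ := fun x => Real.exp (π * x / √2 - γ - Real.log 4) with hf
  have hd : ∀ x ∈ Set.univ, HasDerivWithinAt f (f x * (π / √2)) Set.univ x := fun x _ => by
    have := (((((hasDerivAt_id' x).const_mul π).div_const √2).sub_const γ).sub_const
      (Real.log 4)).exp
    rw [mul_one] at this
    exact this.hasDerivWithinAt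
  have hinj : Set.InjOn f Set.univ := fun x _ y _ hxy => by
    have := Real.exp_injective hxy
    field_simp at this
    nlinarith
  have himg : f '' Set.univ = Set.Ioi 0 := by
    rw [Set.image_univ]
    ext u
    constructor
    · rintro ⟨x, rfl⟩; exact Real.exp_pos _
    · intro hu
      refine ⟨(Real.log u + γ + Real.log 4) * √2 / π, ?_⟩
      rw [hf]
      simp only
      rw [show π * ((Real.log u + γ + Real.log 4) * √2 / π) / √2 - γ - Real.log 4 = Real.log u by
        field_simp; ring]
      exact Real.exp_log hu
  have cv := integral_image_eq_integral_abs_deriv_smul MeasurableSet.univ hd hinj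
    (fun u => Real.exp (-u) * u ^ (-(1 / 2) : ℝ) * (γ + Real.log 4 + Real.log u) ^ 3)
  rw [himg, hm, Measure.restrict_univ] at cv
  have key : ∀ x : ℝ, x ^ 3 * ((1 / 2) * √(π / 2) * Real.exp (-(1 / 4) * Real.exp (π * x / √2 - γ)
          + (π * x / √2 - γ) / 2))
      = ((√2 / π) ^ 3 / √π) * (|f x * (π / √2)| • (Real.exp (-f x) * (f x) ^ (-(1 / 2) : ℝ)
        * (γ + Real.log 4 + Real.log (f x)) ^ 3)) := by
    intro x
    have fp : 0 < f x := Real.exp_pos _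
    rw [abs_of_pos (by positivity), smul_eq_mul]
    have e1 : γ + Real.log 4 + Real.log (f x) = π * x / √2 := by
      rw [hf]; simp only [Real.log_exp]; ring
    have e2 : f x = 1 / 4 * Real.exp (π * x / √2 - γ) := by
      rw [hf]; simp only
      rw [Real.exp_sub _ (Real.log 4), Real.exp_log (by norm_num)]; ring
    have e3 : f x * (f x) ^ (-(1 / 2) : ℝ) = 1 / 2 * Real.exp ((π * x / √2 - γ) / 2) := by
      nth_rewrite 1 [← Real.rpow_one (f x)]
      rw [← Real.rpow_add fp, Real.rpow_def_of_pos fp, hf]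
      simp only [Real.log_exp]
      rw [show (4 : ℝ) = 2 ^ 2 by norm_num, Real.log_pow]
      rw [show (π * x / √2 - γ - ((2 : ℕ) : ℝ) * Real.log 2) * (1 + -(1 / 2))
        = (π * x / √2 - γ) / 2 - Real.log 2 by push_cast; ring, Real.exp_sub,
        Real.exp_log (by norm_num)]
      ring
    have e4 : Real.exp (-(1 / 4) * Real.exp (π * x / √2 - γ) + (π * x / √2 - γ) / 2)
        = Real.exp (-f x) * (2 * (f x * (f x) ^ (-(1 / 2) : ℝ))) := by
      rw [e3, Real.exp_add, e2]; ring_nf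
    have e5 : √(π / 2) = √π / √2 := Real.sqrt_div hpi.le 2
    have e6 : √π ^ 2 = π := Real.sq_sqrt hpi.le
    rw [e4, e1, e5]
    field_simp
    rw [e6]
  simp_rw [key]
  rw [integral_const_mul, ← cv]
  have e7 : √2 ^ 3 = 2 * √2 := by
    rw [pow_succ, Real.sq_sqrt (by norm_num)]
  rw [div_pow, e7]
  field_simp
  ring
end

section
/- Let g(x) = (1/2) √(π/2) exp( −(1/4) e^z + z/2 ) where z = π x/√2 − γ and γ is the Euler–Mascheroni constant. Then the fourth moment satisfies ∫_ℝ x⁴ g(x) dx = 7; in particular, since g has mean 0 and variance 1, the excess kurtosis of the distribution with density g equals 7 − 3 = 4. -/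
open MeasureTheory Real

open ProbabilityTheory Filter Topology Set in
/-- Algebra of derivatives: `M(t) M(-t) cos(π t) = π` near `0`, `M(0) = √π`, `M'(0) = 0`. -/
lemma fourth_deriv_of_reflection (M : ℝ → ℝ) (hM : ContDiffAt ℝ 4 M 0)
    (h : ∀ᶠ t in 𝓝 (0:ℝ), (M t * M (-t)) * cos (π * t) = π)
    (h0 : M 0 = √π) (h1 : iteratedDeriv 1 M 0 = 0) :
    iteratedDeriv 4 M 0 = 7 * π ^ 4 / 4 * √π := by
  have hN : ContDiffAt ℝ 4 (fun t => M (-t)) 0 := by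
    have : ContDiffAt ℝ 4 M (-0) := by simpa using hM
    exact this.comp (0:ℝ) contDiffAt_id.neg
  have hP : ContDiffAt ℝ 4 (M * fun t => M (-t)) 0 := hM.mul hN
  have hC : ContDiff ℝ 4 (fun t : ℝ => cos (π * t)) := by fun_prop
  have hc : ∀ n : ℕ, iteratedDeriv n (fun t : ℝ => cos (π * t)) 0
      = π ^ n * iteratedDeriv n cos 0 := by
    intro n
    have hh : ContDiff ℝ n cos := by fun_prop
    rw [iteratedDeriv_comp_const_mul hh]
    simp
  have hp : ∀ n : ℕ, n ≤ 4 → iteratedDeriv n (M * fun t => M (-t)) 0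
      = ∑ i ∈ Finset.range (n+1), n.choose i * iteratedDeriv i M 0 *
        ((-1) ^ (n - i) * iteratedDeriv (n - i) M 0) := by
    intro n hn
    have hn' : ((n : ℕ∞) : WithTop ℕ∞) ≤ 4 := by
      have h4 : (n : ℕ∞) ≤ ((4 : ℕ) : ℕ∞) := Nat.cast_le.2 hn
      exact WithTop.coe_le_coe.2 h4
    rw [iteratedDeriv_mul (hM.of_le hn') (hN.of_le hn')]
    refine Finset.sum_congr rfl fun i _ => ?_
    rw [iteratedDeriv_comp_neg]
    simp
  have key : ∀ n : ℕ, n ≤ 4 → iteratedDeriv n (fun _ : ℝ => π) 0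
      = ∑ i ∈ Finset.range (n+1), n.choose i * iteratedDeriv i (M * fun t => M (-t)) 0 *
        (π ^ (n - i) * iteratedDeriv (n - i) cos 0) := by
    intro n hn
    have hn' : ((n : ℕ∞) : WithTop ℕ∞) ≤ 4 := by
      have h4 : (n : ℕ∞) ≤ ((4 : ℕ) : ℕ∞) := Nat.cast_le.2 hn
      exact WithTop.coe_le_coe.2 h4
    have h' : ((M * fun t => M (-t)) * fun t => cos (π * t)) =ᶠ[𝓝 0] fun _ : ℝ => π := h
    rw [← h'.iteratedDeriv_eq, iteratedDeriv_mul (hP.of_le hn') (hC.contDiffAt.of_le hn')]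
    refine Finset.sum_congr rfl fun i _ => ?_
    rw [hc]
  have k2 := key 2 (by norm_num)
  have k4 := key 4 (by norm_num)
  simp only [Finset.sum_range_succ, Finset.sum_range_zero] at k2 k4
  rw [hp 0 (by norm_num), hp 1 (by norm_num), hp 2 (by norm_num)] at k2
  rw [hp 0 (by norm_num), hp 1 (by norm_num), hp 2 (by norm_num), hp 3 (by norm_num),
    hp 4 (by norm_num)] at k4
  have e2 : iteratedDeriv 2 (fun _ : ℝ => π) 0 = 0 := by simp [iteratedDeriv_const]
  have e4 : iteratedDeriv 4 (fun _ : ℝ => π) 0 = 0 := by simp [iteratedDeriv_const]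
  have c0 : iteratedDeriv 0 cos 0 = 1 := by simp
  have c1 : iteratedDeriv 1 cos 0 = 0 := by simp
  have c2 : iteratedDeriv 2 cos 0 = -1 := by
    have := congrFun (Real.iteratedDeriv_even_cos 1) 0
    simpa using this
  have c3 : iteratedDeriv 3 cos 0 = 0 := by
    have := congrFun (Real.iteratedDeriv_odd_cos 1) 0
    simpa using this
  have c4 : iteratedDeriv 4 cos 0 = 1 := by
    have := congrFun (Real.iteratedDeriv_even_cos 2) 0
    simpa using this
  have m0 : iteratedDeriv 0 M 0 = √π := by simpa using h0
  have ch : Nat.choose 4 2 = 6 := rfl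
  have ch3 : Nat.choose 4 3 = 4 := rfl
  have ch3' : Nat.choose 3 2 = 3 := rfl
  norm_num [Finset.sum_range_succ, c1, c2, c3, c4, h0, e2, e4, h1, ch, ch3, ch3',
    -iteratedDeriv_one, -iteratedDeriv_zero, c0, m0, -iteratedDeriv_const] at k2 k4
  have hs : 0 < √π := by positivity
  have hs2 : √π * √π = π := Real.mul_self_sqrt pi_pos.le
  have m2 : iteratedDeriv 2 M 0 = π ^ 2 / 2 * √π := by
    apply mul_left_cancel₀ hs.ne'
    linarith
  rw [m2] at k4
  apply mul_left_cancel₀ hs.ne'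
  linear_combination -k4 / 2

open ProbabilityTheory Filter Topology Set

/-- The (unnormalised) Gamma(1/2) measure. -/
noncomputable def gammaHalf : Measure ℝ :=
  (volume.restrict (Ioi (0:ℝ))).withDensity
    (fun u => ((Real.toNNReal (exp (-u) * u ^ (-(1/2) : ℝ)) : NNReal) : ENNReal))

lemma gammaHalf_meas :
    Measurable (fun u : ℝ => Real.toNNReal (exp (-u) * u ^ (-(1/2) : ℝ))) := by
  fun_prop

lemma gammaHalf_integral (f : ℝ → ℝ) :
    ∫ u, f u ∂gammaHalf = ∫ u in Ioi (0:ℝ), exp (-u) * u ^ (-(1/2) : ℝ) * f u := by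
  rw [gammaHalf, integral_withDensity_eq_integral_smul gammaHalf_meas]
  refine setIntegral_congr_fun measurableSet_Ioi fun u hu => ?_
  have : 0 ≤ exp (-u) * u ^ (-(1/2) : ℝ) :=
    mul_nonneg (exp_pos _).le (rpow_nonneg (le_of_lt hu) _)
  simp only [NNReal.smul_def, Real.coe_toNNReal _ this, smul_eq_mul]

lemma gammaHalf_integrable (f : ℝ → ℝ) :
    Integrable f gammaHalf ↔ IntegrableOn (fun u => exp (-u) * u ^ (-(1/2) : ℝ) * f u) (Ioi 0) := by
  rw [gammaHalf, integrable_withDensity_iff_integrable_smul gammaHalf_meas]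
  refine integrableOn_congr_fun (fun u hu => ?_) measurableSet_Ioi
  have : 0 ≤ exp (-u) * u ^ (-(1/2) : ℝ) :=
    mul_nonneg (exp_pos _).le (rpow_nonneg (le_of_lt hu) _)
  simp only [NNReal.smul_def, Real.coe_toNNReal _ this, smul_eq_mul]

lemma integrand_eq (c t : ℝ) {u : ℝ} (hu : 0 < u) :
    exp (-u) * u ^ (-(1/2) : ℝ) * exp (t * (log u + c))
      = exp (t * c) * (exp (-u) * u ^ ((1/2 + t) - 1)) := by
  have : (1/2 + t) - 1 = -(1/2) + t := by ring
  rw [this, rpow_add hu, rpow_def_of_pos hu t, mul_add, exp_add, mul_comm (log u) t]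
  ring

lemma gammaHalf_expSet (c t : ℝ) (ht : -(1/2) < t) :
    t ∈ integrableExpSet (fun u => log u + c) gammaHalf := by
  show Integrable _ _
  rw [gammaHalf_integrable]
  have h := (Real.GammaIntegral_convergent (s := 1/2 + t) (by linarith)).const_mul (exp (t * c))
  exact IntegrableOn.congr_fun h (fun u hu => (integrand_eq c t hu).symm) measurableSet_Ioi

lemma gammaHalf_mgf (c t : ℝ) (ht : -(1/2) < t) :
    mgf (fun u => log u + c) gammaHalf t = exp (t * c) * Gamma (1/2 + t) := by
  rw [mgf, gammaHalf_integral, Real.Gamma_eq_integral (by linarith), ← integral_const_mul]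
  exact setIntegral_congr_fun measurableSet_Ioi fun u hu => integrand_eq c t hu

lemma log_moment :
    ∫ u in Ioi (0:ℝ), exp (-u) * u ^ (-(1/2) : ℝ) *
      (log u + (eulerMascheroniConstant + 2 * log 2)) ^ 4 = 7 * π ^ 4 / 4 * √π := by
  set c := eulerMascheroniConstant + 2 * log 2 with hc
  have hint : (0:ℝ) ∈ interior (integrableExpSet (fun u => log u + c) gammaHalf) := by
    rw [mem_interior]
    exact ⟨Ioi (-(1/2)), fun t ht => gammaHalf_expSet c t ht, isOpen_Ioi, by simp⟩
  have := iteratedDeriv_mgf_zero hint 4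
  rw [gammaHalf_integral] at this
  simp only [Pi.pow_apply] at this
  rw [← this]
  have hev : mgf (fun u => log u + c) gammaHalf =ᶠ[𝓝 0] fun t => exp (t * c) * Gamma (1/2 + t) := by
    filter_upwards [Ioi_mem_nhds (show (-(1/2) : ℝ) < 0 by norm_num)] with t ht
    exact gammaHalf_mgf c t ht
  apply fourth_deriv_of_reflection
  · exact (analyticAt_mgf hint).contDiffAt
  · filter_upwards [Ioo_mem_nhds (show (-(1/2) : ℝ) < 0 by norm_num)
      (show (0:ℝ) < 1/2 by norm_num)] with t ht
    rw [gammaHalf_mgf c t ht.1, gammaHalf_mgf c (-t) (by linarith [ht.2])]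
    have h1 := Real.Gamma_mul_Gamma_one_sub (1/2 + t)
    have h2 : (1:ℝ) - (1/2 + t) = 1/2 + -t := by ring
    have h3 : π * (1/2 + t) = π * t + π / 2 := by ring
    rw [h2, h3, sin_add_pi_div_two] at h1
    have h4 : 0 < cos (π * t) := by
      apply cos_pos_of_mem_Ioo
      constructor <;> nlinarith [pi_pos, ht.1, ht.2]
    have h5 : exp (t * c) * exp (-t * c) = 1 := by
      rw [← exp_add]; simp
    calc _ = (exp (t * c) * exp (-t * c)) * (Gamma (1/2 + t) * Gamma (1/2 + -t)) * cos (π * t) := by ring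
      _ = π := by rw [h5, h1]; field_simp
  · rw [gammaHalf_mgf c 0 (by norm_num)]
    simp [← one_div, Real.Gamma_one_half_eq]
  · rw [iteratedDeriv_one, hev.deriv_eq]
    have hG : HasDerivAt Gamma (-√π * (eulerMascheroniConstant + 2 * log 2)) (1/2 + 0) := by
      simpa using Real.hasDerivAt_Gamma_one_half
    have hG2 := hG.comp_const_add (1/2) 0
    have hE : HasDerivAt (fun t : ℝ => exp (t * c)) (exp (0 * c) * (1 * c)) 0 :=
      ((hasDerivAt_id (0:ℝ)).mul_const c).exp
    refine (hE.mul hG2).deriv.trans ?_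
    simp only [add_zero, Real.Gamma_one_half_eq, ← hc]
    simp
    ring

lemma integral_exp_subst (H : ℝ → ℝ) :
    ∫ u in Ioi (0:ℝ), H u = ∫ y : ℝ, exp y * H (exp y) := by
  have := integral_image_eq_integral_abs_deriv_smul (s := univ) (f := exp) (f' := exp)
    MeasurableSet.univ (fun x _ => (Real.hasDerivAt_exp x).hasDerivWithinAt)
    (Real.exp_injective.injOn) H
  simpa [Real.range_exp] using this

/-- The fourth moment of the doubly exponential density
`g(x) = (1/2)√(π/2) exp(-(1/4)e^z + z/2)`, `z = πx/√2 - γ`, equals `7`. -/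
theorem gumbel_density_fourth_moment :
    ∫ x : ℝ, x ^ 4 * ((1 / 2) * Real.sqrt (Real.pi / 2)
        * Real.exp (-(1 / 4) * Real.exp (Real.pi * x / Real.sqrt 2
            - Real.eulerMascheroniConstant)
          + (Real.pi * x / Real.sqrt 2 - Real.eulerMascheroniConstant) / 2))
      = 7 := by
  have hlog := log_moment
  rw [integral_exp_subst] at hlog
  set c := eulerMascheroniConstant + 2 * log 2 with hc
  set G : ℝ → ℝ := fun y => exp y * (exp (-exp y) * exp y ^ (-(1/2) : ℝ) * (log (exp y) + c) ^ 4)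
    with hG
  have ha : 0 < π / √2 := by positivity
  set a := π / √2 with hadef
  have hpt : ∀ x : ℝ, x ^ 4 * ((1 / 2) * Real.sqrt (Real.pi / 2)
        * Real.exp (-(1 / 4) * Real.exp (Real.pi * x / Real.sqrt 2
            - Real.eulerMascheroniConstant)
          + (Real.pi * x / Real.sqrt 2 - Real.eulerMascheroniConstant) / 2))
      = √(π / 2) * (a ^ 4)⁻¹ * G (a * x + -c) := by
    intro x
    have e0 : π * x / √2 = a * x := by rw [hadef]; ring
    have e1 : exp (a * x + -c) = 1/4 * exp (a * x - eulerMascheroniConstant) := by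
      have : a * x + -c = (a * x - eulerMascheroniConstant) - (log 2 + log 2) := by rw [hc]; ring
      rw [this, exp_sub, exp_add, exp_log (by norm_num)]
      ring
    have e2 : exp (a * x + -c) * exp (a * x + -c) ^ (-(1/2) : ℝ)
        = 1/2 * exp ((a * x - eulerMascheroniConstant) / 2) := by
      rw [← exp_mul, ← exp_add]
      have : a * x + -c + (a * x + -c) * -(1/2)
        = (a * x - eulerMascheroniConstant) / 2 - log 2 := by rw [hc]; ring
      rw [this, exp_sub, exp_log (by norm_num)]
      ring
    have e3 : G (a * x + -c) = (exp (a * x + -c) * exp (a * x + -c) ^ (-(1/2) : ℝ))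
        * exp (-exp (a * x + -c)) * (a * x) ^ 4 := by
      simp only [hG, log_exp]
      ring
    rw [e3, e2, e1, e0, exp_add, neg_mul]
    field_simp
  simp_rw [hpt]
  rw [integral_const_mul]
  have h1 := Measure.integral_comp_mul_left (fun y => G (y + -c)) a
  rw [integral_add_right_eq_self G (-c), hlog, abs_of_pos (inv_pos.2 ha)] at h1
  rw [h1, smul_eq_mul]
  have h2 : √(π / 2) * √π = a := by
    rw [hadef, Real.sqrt_div pi_pos.le, div_mul_eq_mul_div, Real.mul_self_sqrt pi_pos.le]
  have h3 : a ^ 4 = π ^ 4 / 4 := by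
    have : √2 ^ 4 = 4 := by
      rw [show √2 ^ 4 = (√2 ^ 2) ^ 2 by ring, Real.sq_sqrt (by norm_num)]; norm_num
    rw [hadef, div_pow, this]
  calc √(π / 2) * (a ^ 4)⁻¹ * (a⁻¹ * (7 * π ^ 4 / 4 * √π))
      = (√(π / 2) * √π) * a⁻¹ * (a ^ 4)⁻¹ * (7 * (π ^ 4 / 4)) := by ring
    _ = 7 := by
      rw [h2, ← h3]
      field_simp
end
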